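/- Let S be a finite set of prime numbers and let a be a positive integer. There are only finitely many triples (x, y, w) of S-units with gcd(x, y) ≤ a for which there exist an integer n ≥ 2 and a nonzero integer z such that x + y = w·z^n. -/

import Mathlib

/-- An `S`-unit: a nonzero integer all of whose prime divisors belong to `S`. -/
def IsSUnit (S : Finset ℕ) (x : ℤ) : Prop :=
  x ≠ 0 ∧ ∀ p : ℕ, p.Prime → (p : ℤ) ∣ x → p ∈ S


open Finset in
theorem na_sum_le {F ι : Type*} [Field F] (v : AbsoluteValue F ℝ) (hv : IsNonarchimedean v)
    (s : Finset ι) (f : ι → F) (C : ℝ) (hC : 0 ≤ C) (h : ∀ i ∈ s, v (f i) ≤ C) :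
    v (∑ i ∈ s, f i) ≤ C := by
  classical
  induction s using Finset.induction with
  | empty => simpa using hC
  | insert a s ha ih =>
    rw [Finset.sum_insert ha]
    refine (hv _ _).trans (max_le (h _ (by simp)) (ih fun i hi => h i (by simp [hi])))

theorem na_nat_le {F : Type*} [Field F] (v : AbsoluteValue F ℝ) (hv : IsNonarchimedean v)
    (n : ℕ) : v (n : F) ≤ 1 := by
  have := na_sum_le v hv (Finset.range n) (fun _ => (1 : F)) 1 zero_le_one (by simp)
  simpa using this

theorem na_det_le {F R : Type*} [Field F] (v : AbsoluteValue F ℝ) (hv : IsNonarchimedean v)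
    [Fintype R] [DecidableEq R] (M : Matrix R R F) (C : ℝ) (hC : 0 ≤ C) (h : ∀ i j, v (M i j) ≤ C) :
    v M.det ≤ C ^ Fintype.card R := by
  rw [Matrix.det_apply]
  refine na_sum_le v hv _ _ _ (by positivity) fun σ _ => ?_
  have : v (Equiv.Perm.sign σ • ∏ i, M (σ i) i) = ∏ i, v (M (σ i) i) := by
    rcases Int.units_eq_one_or (Equiv.Perm.sign σ) with h | h <;> simp [h, map_prod]
  rw [this]
  calc _ ≤ ∏ _i : R, C := Finset.prod_le_prod (fun _ _ => v.nonneg _) fun _ _ => h _ _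
    _ = _ := by simp

theorem abs_det_le {F R : Type*} [Field F] (v : AbsoluteValue F ℝ)
    [Fintype R] [DecidableEq R] (M : Matrix R R F) (C : ℝ) (h : ∀ i j, v (M i j) ≤ C) :
    v M.det ≤ (Fintype.card R).factorial * C ^ Fintype.card R := by
  rw [Matrix.det_apply]
  refine (v.sum_le _ _).trans ?_
  have : ∀ σ ∈ (Finset.univ : Finset (Equiv.Perm R)),
      v (Equiv.Perm.sign σ • ∏ i, M (σ i) i) ≤ C ^ Fintype.card R := by
    intro σ _
    have : v (Equiv.Perm.sign σ • ∏ i, M (σ i) i) = ∏ i, v (M (σ i) i) := by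
      rcases Int.units_eq_one_or (Equiv.Perm.sign σ) with h | h <;> simp [h, map_prod]
    rw [this]
    calc _ ≤ ∏ _i : R, C := Finset.prod_le_prod (fun _ _ => v.nonneg _) fun _ _ => h _ _
      _ = _ := by simp
  refine (Finset.sum_le_card_nsmul _ _ _ this).trans ?_
  simp [Fintype.card_perm]

theorem wt_sum {R : Type*} [Fintype R] [DecidableEq R] (N : ℕ) (hN : N = Fintype.card R)
    (f : R → Fin N ⊕ R) (hf : Function.Injective f) :
    N * (N - 1) / 2 ≤
      ∑ r, Sum.elim (fun i : Fin N => (i : ℕ)) (fun _ => N) (f r) := by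
  set w := Sum.elim (fun i : Fin N => (i : ℕ)) (fun _ : R => N) with hw
  have hwN : ∀ x, w x ≤ N := by
    rintro (i | x)
    · exact i.2.le
    · simp [hw]
  have h1 : ∀ r, w (f r) = ∑ t ∈ Finset.range N, if t < w (f r) then 1 else 0 := by
    intro r
    rw [Finset.sum_boole]
    have : Finset.filter (fun t => t < w (f r)) (Finset.range N) = Finset.range (w (f r)) := by
      ext t; simp; intro h; exact lt_of_lt_of_le h (hwN _)
    rw [this]; simp
  rw [Finset.sum_congr rfl fun r _ => h1 r, Finset.sum_comm, ← Finset.sum_range_id_mul_two N,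
    Nat.mul_div_cancel _ two_pos, ← Finset.sum_range_reflect]
  refine Finset.sum_le_sum fun t ht => ?_
  rw [Finset.mem_range] at ht
  rw [Finset.sum_boole]
  have h2 : (Finset.univ.filter fun r => ¬ t < w (f r)).card ≤ t + 1 := by
    rw [← Finset.card_range (t + 1)]
    refine Finset.card_le_card_of_injOn (fun r => w (f r)) ?_ ?_
    · intro r hr; simp at hr ⊢; omega
    · intro r hr r' hr' h
      simp only [Finset.coe_filter, Finset.mem_univ, true_and, Set.mem_setOf_eq, not_lt] at hr hr'
      apply hf
      rcases h3 : f r with i | x <;> rcases h4 : f r' with i' | x' <;>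
        simp [hw, h3, h4] at h hr hr' ⊢ <;> first | omega | (ext; exact h)
  have h3 := Finset.card_filter_add_card_filter_not (s := (Finset.univ : Finset R)) (fun r => t < w (f r))
  simp only [Finset.card_univ, ← hN] at h3
  simp only [Nat.cast_id]
  omega

theorem det_small {F R : Type*} [Field F] (v : AbsoluteValue F ℝ) (hv : IsNonarchimedean v)
    [Fintype R] [DecidableEq R] (M : Matrix R R F) (k : R → ℕ) (a : R → ℕ → F)
    (B : ℕ → R → F) (e : R → R → F)
    (hM : ∀ r j, M r j = ∑ i ∈ Finset.range (Fintype.card R), a r i * B i j + e r j)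
    (ha : ∀ r i, v (a r i) * (1/2) ^ k r ≤ (1/2) ^ i) (hB : ∀ i j, v (B i j) ≤ 1)
    (he : ∀ r j, v (e r j) * (1/2) ^ k r ≤ (1/2) ^ Fintype.card R) :
    v M.det * (1/2) ^ (∑ r, k r) ≤ (1/2) ^ (Fintype.card R * (Fintype.card R - 1) / 2) := by
  set N := Fintype.card R with hN
  let A' : R → Fin N ⊕ R → F := fun r => Sum.elim (fun i => a r i) (fun j => e r j)
  let B' : Fin N ⊕ R → R → F := Sum.elim (fun i => B i) (fun c => Pi.single c 1)
  let w : Fin N ⊕ R → ℕ := Sum.elim (fun i : Fin N => (i : ℕ)) (fun _ : R => N)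
  have hM' : M = fun r => ∑ x, A' r x • B' x := by
    ext r j
    rw [hM, Fintype.sum_sum_type, Pi.add_apply, Finset.sum_apply, Finset.sum_apply,
      Finset.sum_range]
    simp [A', B', Pi.single_apply]
  have hdet : M.det = ∑ f : R → Fin N ⊕ R, (∏ r, A' r (f r)) * Matrix.det (fun r => B' (f r)) := by
    rw [hM']
    change Matrix.detRowAlternating (fun r => ∑ x, A' r x • B' x) = _
    rw [← AlternatingMap.coe_multilinearMap, MultilinearMap.map_sum]
    refine Finset.sum_congr rfl fun f _ => ?_
    rw [MultilinearMap.map_smul_univ]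
    rfl
  have hpow : ∀ r x, v (A' r x) * (1/2) ^ k r ≤ (1/2) ^ w x := by
    rintro r (i | x)
    · exact ha r i
    · exact he r x
  have hdB : ∀ f : R → Fin N ⊕ R, v (Matrix.det (fun r => B' (f r))) ≤ 1 := by
    intro f
    refine (na_det_le v hv _ 1 zero_le_one ?_).trans (by simp)
    intro r j
    rcases hfr : f r with i | x
    · simpa [B', hfr] using hB i j
    · by_cases hx : j = x
      · subst hx; simp [B', hfr]
      · simp [B', hfr, Pi.single_apply, hx]
  rw [hdet]
  have key : ∀ f ∈ (Finset.univ : Finset (R → Fin N ⊕ R)),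
      v ((∏ r, A' r (f r)) * Matrix.det (fun r => B' (f r))) ≤
        (1/2) ^ (N * (N - 1) / 2) / (1/2) ^ (∑ r, k r) := by
    intro f _
    by_cases hf : Function.Injective f
    · rw [le_div_iff₀ (by positivity), map_mul, map_prod, ← Finset.prod_pow_eq_pow_sum]
      calc _ = (∏ r, (v (A' r (f r)) * (1/2) ^ k r)) * v (Matrix.det (fun r => B' (f r))) := by
            rw [Finset.prod_mul_distrib]; ring
        _ ≤ (∏ r, (1/2 : ℝ) ^ w (f r)) * 1 := by
            refine mul_le_mul (Finset.prod_le_prod (fun r _ => by positivity) fun r _ => hpow r _)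
              (hdB f) (v.nonneg _) (Finset.prod_nonneg fun r _ => by positivity)
        _ = (1/2 : ℝ) ^ (∑ r, w (f r)) := by rw [Finset.prod_pow_eq_pow_sum, mul_one]
        _ ≤ _ := pow_le_pow_of_le_one (by norm_num) (by norm_num) (wt_sum N hN f hf)
    · have : Matrix.det (fun r => B' (f r)) = 0 := by
        simp only [Function.Injective, not_forall] at hf
        obtain ⟨r, r', h, hne⟩ := hf
        exact Matrix.det_zero_of_row_eq hne (by simp [h])
      rw [this]
      simp only [mul_zero, map_zero]
      positivity
  have := na_sum_le v hv _ _ _ (by positivity) key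
  rwa [le_div_iff₀ (by positivity)] at this

theorem newton_expand {F : Type*} [Field F] (ω : F) (j k : ℕ) :
    (j.choose k : F) * ω ^ j = ∑ i ∈ Finset.range (j + 1),
      ((if k ≤ i then (i.choose k : F) * ω ^ k * (ω - 1) ^ (i - k) else 0) * (j.choose i : F)) := by
  by_cases hk : k ≤ j
  · obtain ⟨d, rfl⟩ := Nat.exists_eq_add_of_le hk
    have h1 : ω ^ d = ∑ m ∈ Finset.range (d + 1), (ω - 1) ^ m * (d.choose m : F) := by
      conv_lhs => rw [show ω = (ω - 1) + 1 by ring, add_pow]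
      simp
    rw [show k + d + 1 = k + (d + 1) by ring, Finset.sum_range_add]
    rw [Finset.sum_eq_zero (s := Finset.range k), zero_add, pow_add, h1, Finset.mul_sum, Finset.mul_sum]
    · refine Finset.sum_congr rfl fun m hm => ?_
      have hm' : m ≤ d := by simpa [Nat.lt_succ_iff] using hm
      have := Nat.choose_mul (n := k + d) (k := k + m) (s := k) (by omega)
      have h2 : ((k + d).choose (k + m) : F) * ((k + m).choose k : F) =
          ((k + d).choose k : F) * (d.choose m : F) := by
        have h3 := congrArg (Nat.cast (R := F)) this
        simpa using h3
      simp only [Nat.le_add_right, if_true, Nat.add_sub_cancel_left]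
      linear_combination (-ω ^ k * (ω - 1) ^ m) * h2
    · intro i hi
      have : ¬ k ≤ i := by simpa using hi
      simp [this]
  · rw [Nat.choose_eq_zero_of_lt (by omega)]
    rw [Finset.sum_eq_zero]; · simp
    intro i hi
    have : ¬ k ≤ i := by simp at hi; omega
    simp [this]


section PartB
open Height AdmissibleAbsValues

lemma hfms_max {K : Type*} [Field K] [AdmissibleAbsValues K] (x : K) :
    (fun v : nonarchAbsVal (K := K) ↦ max (v.val x) 1).HasFiniteMulSupport := by
  rcases eq_or_ne x 0 with rfl | hx
  · simp [Function.HasFiniteMulSupport, Function.mulSupport]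
  · have := AdmissibleAbsValues.hasFiniteMulSupport hx
    fun_prop

lemma height_bound {K : Type*} [Field K] [AdmissibleAbsValues K] {ι : Type*} (s : Finset ι)
    (y : ι → K) (e : ι → ℕ) (x : K) (C : ℝ) (hC : 1 ≤ C)
    (ha : ∀ v ∈ archAbsVal (K := K), v x ≤ C * ∏ i ∈ s, max (v (y i)) 1 ^ e i)
    (hn : ∀ v ∈ nonarchAbsVal (K := K), v x ≤ ∏ i ∈ s, max (v (y i)) 1 ^ e i) :
    mulHeight₁ x ≤ C ^ totalWeight K * ∏ i ∈ s, mulHeight₁ (y i) ^ e i := by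
  have one_le : ∀ v : AbsoluteValue K ℝ, 1 ≤ ∏ i ∈ s, max (v (y i)) 1 ^ e i := fun v ↦
    Finset.one_le_prod fun _ _ ↦ one_le_pow₀ (le_max_right _ _)
  have hf : ∀ i, (fun v : nonarchAbsVal (K := K) ↦ max (v.val (y i)) 1 ^ e i).HasFiniteMulSupport :=
    fun i ↦ by have := hfms_max (y i); fun_prop
  have hf2 : (fun v : nonarchAbsVal (K := K) ↦
      ∏ i ∈ s, max (v.val (y i)) 1 ^ e i).HasFiniteMulSupport := by
    fun_prop
  simp only [mulHeight₁_eq, totalWeight, mul_pow]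
  have e1 : ∀ i, (∏ᶠ v : nonarchAbsVal (K := K), max (v.val (y i)) 1) ^ e i
      = ∏ᶠ v : nonarchAbsVal (K := K), max (v.val (y i)) 1 ^ e i :=
    fun i ↦ finprod_pow (hfms_max _) _
  simp only [← Multiset.prod_map_pow, e1]
  rw [Finset.prod_mul_distrib, ← Multiset.prod_replicate, ← Multiset.map_const,
    ← finprod_prod_comm _ _ (fun i _ ↦ hf i),
    ← Multiset.prod_map_prod, ← mul_assoc, ← Multiset.prod_map_mul]
  simp only [Function.const_apply]
  gcongr
  · exact finprod_nonneg fun _ ↦ by positivity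
  · exact Multiset.prod_map_nonneg fun _ h ↦ by positivity
  · refine Multiset.prod_map_le_prod_map₀ _ _ (fun _ _ ↦ by positivity) fun v hv ↦ ?_
    exact max_le (ha v hv) (one_le_mul_of_one_le_of_one_le hC (one_le v))
  · exact finprod_le_finprod (hfms_max x) (fun _ ↦ by positivity) hf2 <|
      fun v ↦ max_le (hn v.1 v.2) (one_le v.1)

lemma le_mulHeight_nonarch {K : Type*} [Field K] [AdmissibleAbsValues K] (x : K)
    (v : AbsoluteValue K ℝ) (hv : v ∈ nonarchAbsVal (K := K)) : v x ≤ mulHeight₁ x := by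
  rw [mulHeight₁_eq]
  have h1 : 1 ≤ (archAbsVal.map fun v : AbsoluteValue K ℝ ↦ max (v x) 1).prod := by
    induction (archAbsVal : Multiset (AbsoluteValue K ℝ)) using Multiset.induction_on with
    | empty => simp
    | cons w t ih =>
      rw [Multiset.map_cons, Multiset.prod_cons]
      exact one_le_mul_of_one_le_of_one_le (le_max_right _ _) ih
  have h2 : v x ≤ ∏ᶠ v : nonarchAbsVal (K := K), max (v.val x) 1 := by
    refine (le_max_left (v x) 1).trans ?_
    classical
    have e1 : ∏ᶠ w : nonarchAbsVal (K := K), (if w = ⟨v, hv⟩ then max (v x) 1 else 1)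
        = max (v x) 1 := by
      rw [finprod_eq_single _ ⟨v, hv⟩ (fun w hw ↦ by simp [hw])]
      simp
    rw [← e1]
    refine finprod_le_finprod ?_ (fun w ↦ ?_) (hfms_max x) (fun w ↦ ?_)
    · refine (Set.finite_singleton (⟨v, hv⟩ : nonarchAbsVal (K := K))).subset fun w hw ↦ ?_
      by_contra h
      exact hw (if_neg h)
    · split_ifs <;> positivity
    · by_cases h : w = ⟨v, hv⟩
      · subst h; simp
      · simp [h]
  have h3 : 0 ≤ v x := v.nonneg x
  nlinarith

lemma liouville_nonarch {K : Type*} [Field K] [AdmissibleAbsValues K] (x : K) (hx : x ≠ 0)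
    (v : AbsoluteValue K ℝ) (hv : v ∈ nonarchAbsVal (K := K)) : 1 ≤ mulHeight₁ x * v x := by
  have := le_mulHeight_nonarch x⁻¹ v hv
  rw [mulHeight₁_inv, map_inv₀] at this
  have h3 : 0 < v x := v.pos hx
  rwa [inv_le_iff_one_le_mul₀ h3] at this

end PartB


section PartC
open Polynomial

lemma prod_coeff_top {F : Type*} [CommRing F] {ι : Type*} (s : Finset ι) (f : ι → F[X])
    (d : ι → ℕ) (h : ∀ i ∈ s, (f i).natDegree ≤ d i) :
    (∏ i ∈ s, f i).natDegree ≤ ∑ i ∈ s, d i ∧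
    (∏ i ∈ s, f i).coeff (∑ i ∈ s, d i) = ∏ i ∈ s, (f i).coeff (d i) := by
  classical
  induction s using Finset.induction_on with
  | empty => simp
  | insert a s ha ih =>
    obtain ⟨h1, h2⟩ := ih (fun i hi ↦ h i (Finset.mem_insert_of_mem hi))
    have h3 := h a (Finset.mem_insert_self _ _)
    rw [Finset.prod_insert ha, Finset.sum_insert ha, Finset.prod_insert ha]
    exact ⟨natDegree_mul_le_of_le h3 h1, by rw [coeff_mul_add_eq_of_natDegree_le h3 h1, h2]⟩

lemma det_coeff_top {F : Type*} [CommRing F] {n : ℕ} (M : Matrix (Fin n) (Fin n) F[X])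
    (d : Fin n → ℕ) (h : ∀ i j, (M i j).natDegree ≤ d j) :
    M.det.natDegree ≤ ∑ j, d j ∧
    M.det.coeff (∑ j, d j) = (Matrix.of fun i j ↦ (M i j).coeff (d j)).det := by
  have key := fun σ : Equiv.Perm (Fin n) ↦
    prod_coeff_top Finset.univ (fun j ↦ M (σ j) j) d (fun j _ ↦ h _ _)
  rw [Matrix.det_apply', Matrix.det_apply']
  constructor
  · refine natDegree_sum_le_of_forall_le _ _ fun σ _ ↦ ?_
    have : (((Equiv.Perm.sign σ : ℤˣ) : ℤ) : F[X]) = C (((Equiv.Perm.sign σ : ℤˣ) : ℤ) : F) := by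
      simp
    rw [this]
    exact (natDegree_C_mul_le _ _).trans (key σ).1
  · rw [finsetSum_coeff]
    refine Finset.sum_congr rfl fun σ _ ↦ ?_
    have : (((Equiv.Perm.sign σ : ℤˣ) : ℤ) : F[X]) = C (((Equiv.Perm.sign σ : ℤˣ) : ℤ) : F) := by
      simp
    rw [this, coeff_C_mul, (key σ).2]
    rfl

lemma zero_est {F : Type*} [Field F] {ι : Type*} (L K : ℕ) (ω : F)
    (hω : ∀ l l', l < L → l' < L → ω ^ l = ω ^ l' → l = l')
    (P : Fin L → F[X]) (hP : ∀ l, (P l).natDegree < K) (s : Finset ι) (z χ : ι → F)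
    (hz : Set.InjOn z s) (hχ : ∀ i ∈ s, χ i ≠ 0) (hcard : K * L ≤ s.card)
    (h : ∀ i ∈ s, ∀ e < L, ∑ l : Fin L, (P l).eval (z i + e) * (χ i * ω ^ e) ^ (l : ℕ) = 0) :
    ∀ l, P l = 0 := by
  classical
  by_contra! hne
  obtain ⟨l0, hl0⟩ := hne
  let T := {l : Fin L // P l ≠ 0}
  let τ := Fintype.card T
  let σ : Fin τ ≃ T := (Fintype.equivFin T).symm
  have hτ : τ ≤ L := by
    have := Fintype.card_subtype_le (fun l : Fin L ↦ P l ≠ 0)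
    rwa [Fintype.card_fin] at this
  have hτ0 : 0 < τ := Fintype.card_pos_iff.2 ⟨⟨l0, hl0⟩⟩
  let M : Matrix (Fin τ) (Fin τ) F[X] :=
    fun e t ↦ taylor ((e : ℕ) : F) (P (σ t).1) * C (ω ^ ((e : ℕ) * ((σ t).1 : ℕ)))
  let d : Fin τ → ℕ := fun t ↦ (P (σ t).1).natDegree
  have hM : ∀ e t, (M e t).natDegree ≤ d t := fun e t ↦ by
    refine (natDegree_mul_C_le _ _).trans ?_
    rw [natDegree_taylor]
  obtain ⟨hd1, hd2⟩ := det_coeff_top M d hM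
  have hcoef : M.det.coeff (∑ j, d j) ≠ 0 := by
    rw [hd2]
    have e1 : (Matrix.of fun i j ↦ (M i j).coeff (d j))
        = Matrix.of fun i j ↦ (P (σ j).1).leadingCoeff *
          ((Matrix.vandermonde fun t : Fin τ ↦ ω ^ ((σ t).1 : ℕ)).transpose i j) := by
      ext i j
      simp only [Matrix.of_apply, M, d, coeff_mul_C, coeff_taylor_natDegree,
        Matrix.transpose_apply, Matrix.vandermonde_apply]
      rw [← pow_mul, mul_comm (i : ℕ)]
    rw [e1, Matrix.det_mul_row]
    refine mul_ne_zero (Finset.prod_ne_zero_iff.2 fun t _ ↦ leadingCoeff_ne_zero.2 (σ t).2) ?_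
    rw [Matrix.det_transpose, Matrix.det_vandermonde_ne_zero_iff]
    intro t t' htt
    have := hω _ _ (σ t).1.2 (σ t').1.2 htt
    exact σ.injective (Subtype.ext (Fin.ext this))
  have hM0 : M.det = 0 := by
    apply eq_zero_of_natDegree_lt_card_of_eval_eq_zero' _ (s.image z)
    · intro w hw
      obtain ⟨i, hi, rfl⟩ := Finset.mem_image.1 hw
      have : eval (z i) M.det = ((evalRingHom (z i)).mapMatrix M).det := by
        rw [← RingHom.map_det]; rfl
      rw [this]
      apply Matrix.exists_mulVec_eq_zero_iff.1
      refine ⟨fun t ↦ χ i ^ ((σ t).1 : ℕ), ?_, ?_⟩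
      · intro h0
        exact pow_ne_zero _ (hχ i hi) (congrFun h0 ⟨0, hτ0⟩)
      · ext e
        have he := h i hi e (e.2.trans_le hτ)
        have e0 : ∀ t, (evalRingHom (z i)).mapMatrix M e t =
            eval (z i + ((e : ℕ) : F)) (P (σ t).1) * ω ^ ((e : ℕ) * ((σ t).1 : ℕ)) := by
          intro t
          rw [RingHom.mapMatrix_apply, Matrix.map_apply]
          simp only [M, coe_evalRingHom, eval_mul, eval_C, taylor_eval]
        simp only [Matrix.mulVec, dotProduct, Pi.zero_apply, e0]
        rw [← he]
        have e2 : ∀ t : Fin τ, eval (z i + ((e : ℕ) : F)) (P (σ t).1) *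
            ω ^ ((e : ℕ) * ((σ t).1 : ℕ)) * χ i ^ ((σ t).1 : ℕ) =
            eval (z i + ((e : ℕ) : F)) (P (σ t).1) * (χ i * ω ^ (e : ℕ)) ^ ((σ t).1 : ℕ) := by
          intro t
          rw [mul_pow, ← pow_mul]; ring
        rw [Finset.sum_congr rfl (fun t _ ↦ e2 t)]
        rw [σ.sum_comp (fun t : T ↦ eval (z i + ((e : ℕ) : F)) (P t.1) *
          (χ i * ω ^ (e : ℕ)) ^ (t.1 : ℕ))]
        rw [← Finset.sum_subtype (p := fun l ↦ P l ≠ 0) (Finset.univ.filter fun l ↦ P l ≠ 0)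
          (by simp)
          (fun l : Fin L ↦ eval (z i + ((e : ℕ) : F)) (P l) * (χ i * ω ^ (e : ℕ)) ^ (l : ℕ))]
        refine Finset.sum_subset (Finset.subset_univ _) fun l _ hl ↦ ?_
        have : P l = 0 := by simpa using hl
        simp [this]
    · rw [Finset.card_image_of_injOn hz]
      refine (hd1.trans_lt ?_).trans_le hcard
      calc ∑ j, d j < ∑ j : Fin τ, K :=
            Finset.sum_lt_sum_of_nonempty ⟨⟨0, hτ0⟩, Finset.mem_univ _⟩ fun t _ ↦ hP _
        _ = τ * K := by simp
        _ ≤ K * L := by rw [mul_comm]; exact Nat.mul_le_mul_left _ hτ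
  exact hcoef (by rw [hM0]; simp)

lemma exists_minor {F : Type*} [Field F] {R E : Type*} [Fintype R] [DecidableEq R] [Fintype E]
    (G : Matrix R E F) (h : ∀ c : R → F, (∀ e, ∑ r, c r * G r e = 0) → c = 0) :
    ∃ f : R → E, (G.submatrix id f).det ≠ 0 := by
  classical
  have hli : LinearIndependent F G.row := by
    rw [Fintype.linearIndependent_iff]
    intro g hg r
    have := h g (fun e ↦ by simpa [Matrix.row] using congrFun hg e)
    simp [this]
  have hrank := hli.rank_matrix
  rw [Matrix.rank_eq_finrank_span_cols] at hrank
  obtain ⟨κ, a, ha, hs, hl⟩ := exists_linearIndependent' F G.col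
  have : Finite κ := Finite.of_injective a ha
  have := Fintype.ofFinite κ
  have hc := finrank_span_eq_card hl
  rw [hs, hrank] at hc
  let ε := Fintype.equivOfCardEq hc
  refine ⟨a ∘ ε, ?_⟩
  rw [← isUnit_iff_ne_zero, ← Matrix.isUnit_iff_isUnit_det, ← Matrix.linearIndependent_cols_iff_isUnit]
  exact hl.comp ε ε.injective

end PartC


section PartD
open Polynomial

lemma choose_bound (T K J k : ℕ) (hT : 1 ≤ T) (hk : k < K) (hJ : J ≤ T * K) :
    (J.choose k : ℝ) ≤ (3 * T : ℝ) ^ K := by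
  have hT' : (1 : ℝ) ≤ T := by exact_mod_cast hT
  have hT0 : (0 : ℝ) < T := by linarith
  rcases le_or_gt k J with hkJ | hkJ
  swap
  · rw [Nat.choose_eq_zero_of_lt hkJ, Nat.cast_zero]; positivity
  have h1 : (1 / (T : ℝ)) ^ k * (J.choose k : ℝ) ≤ (1 / (T : ℝ) + 1) ^ J := by
    rw [add_pow]
    have := Finset.single_le_sum (f := fun m ↦ (1 / (T : ℝ)) ^ m * 1 ^ (J - m) * (J.choose m : ℝ))
      (s := Finset.range (J + 1)) (fun _ _ ↦ by positivity) (Finset.mem_range.2 (by omega : k < J + 1))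
    simpa using this
  have h2 : (1 / (T : ℝ) + 1) ^ J ≤ 3 ^ K := by
    calc (1 / (T : ℝ) + 1) ^ J ≤ (Real.exp (1 / T)) ^ J :=
          pow_le_pow_left₀ (by positivity) (Real.add_one_le_exp _) _
      _ = Real.exp (J / T) := by rw [← Real.exp_nat_mul]; congr 1; ring
      _ ≤ Real.exp K := by
          apply Real.exp_le_exp.2
          rw [div_le_iff₀ hT0, mul_comm]; exact_mod_cast hJ
      _ = (Real.exp 1) ^ K := by rw [← Real.exp_nat_mul]; simp
      _ ≤ 3 ^ K := pow_le_pow_left₀ (by positivity) Real.exp_one_lt_three.le _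
  have h3 : (J.choose k : ℝ) = (T : ℝ) ^ k * ((1 / (T : ℝ)) ^ k * (J.choose k : ℝ)) := by
    rw [← mul_assoc, ← mul_pow, mul_one_div_cancel hT0.ne', one_pow, one_mul]
  rw [h3, mul_pow, mul_comm (3 ^ K)]
  exact mul_le_mul (pow_le_pow_right₀ hT' hk.le) (h1.trans h2) (by positivity) (by positivity)

lemma na_pow_sub_one {F : Type*} [Field F] (v : AbsoluteValue F ℝ) (hv : IsNonarchimedean v)
    (x : F) (hx : v x ≤ 1) (m : ℕ) : v (x ^ m - 1) ≤ v (x - 1) := by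
  rw [← geom_sum_mul, map_mul]
  have : v (∑ i ∈ Finset.range m, x ^ i) ≤ 1 :=
    na_sum_le v hv _ _ _ zero_le_one fun i _ ↦ by
      rw [map_pow]; exact pow_le_one₀ (v.nonneg _) hx
  exact mul_le_of_le_one_left (v.nonneg _) this

lemma na_one_of_sub_lt {F : Type*} [Field F] (v : AbsoluteValue F ℝ) (hv : IsNonarchimedean v)
    (x : F) (hx : v (x - 1) < 1) : v x = 1 := by
  have h1 : v x ≤ 1 := by
    have := hv (x - 1) 1
    rw [sub_add_cancel, map_one] at this
    exact this.trans (max_le hx.le le_rfl)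
  have h2 : 1 ≤ max (v (x - 1)) (v x) := by
    have := hv (-(x - 1)) x
    rw [show -(x - 1) + x = 1 by ring, map_one, v.map_neg] at this
    exact this
  rcases le_max_iff.1 h2 with h | h
  · linarith
  · exact le_antisymm h1 h

lemma interp_nonzero {F : Type*} [Field F] [CharZero F] (K L I A : ℕ) (Λ ω : F)
    (hΛ : Λ ≠ 0) (hω0 : ω ≠ 0) (hω : ∀ l l', l < L → l' < L → ω ^ l = ω ^ l' → l = l')
    (j : ℕ → ℕ)
    (hj : ∀ i i' a a', i < I → i' < I → a < A → a' < A → j i + a = j i' + a' → i = i' ∧ a = a')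
    (hKL : K * L ≤ I * A) :
    ∃ f : Fin K × Fin L → Fin I × Fin (A + L),
      (Matrix.of fun (r : Fin K × Fin L) (c : Fin K × Fin L) ↦
        (((j (f c).1 + (f c).2).choose r.1 : ℕ) : F) *
          (Λ ^ ((f c).1 : ℕ) * ω ^ (j (f c).1 + (f c).2)) ^ (r.2 : ℕ)).det ≠ 0 := by
  classical
  have := exists_minor (Matrix.of fun (r : Fin K × Fin L) (c : Fin I × Fin (A + L)) ↦
        (((j c.1 + c.2).choose r.1 : ℕ) : F) *
          (Λ ^ (c.1 : ℕ) * ω ^ (j c.1 + c.2)) ^ (r.2 : ℕ)) ?_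
  · exact this
  intro c hc
  let B : ℕ → F[X] := fun k ↦ C ((k.factorial : F)⁻¹) * descPochhammer F k
  have hB : ∀ k n : ℕ, (B k).eval (n : F) = ((n.choose k : ℕ) : F) := by
    intro k n
    simp only [B, eval_mul, eval_C, descPochhammer_eval_eq_descFactorial,
      Nat.descFactorial_eq_factorial_mul_choose, Nat.cast_mul]
    rw [inv_mul_cancel_left₀]
    exact_mod_cast k.factorial_ne_zero
  have hBd : ∀ k, (B k).natDegree ≤ k := fun k ↦
    (natDegree_C_mul_le _ _).trans (descPochhammer_natDegree F k).le
  let P : Fin L → F[X] := fun l ↦ ∑ k : Fin K, C (c (k, l)) * B k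
  have hPe : ∀ l (n : ℕ), (P l).eval (n : F) = ∑ k : Fin K, c (k, l) * ((n.choose k : ℕ) : F) := by
    intro l n
    simp only [P, eval_finsetSum, eval_mul, eval_C, hB]
  rcases Nat.eq_zero_or_pos K with rfl | hK
  · ext r; exact r.1.elim0
  have hP := zero_est L K ω hω P
    (fun l ↦ by
      refine (natDegree_sum_le_of_forall_le (n := K - 1) _ _ fun k _ ↦ ?_).trans_lt (by omega)
      refine (natDegree_C_mul_le _ _).trans ((hBd k).trans ?_)
      have := k.2; omega)
    (Finset.range I ×ˢ Finset.range A) (fun p ↦ ((j p.1 + p.2 : ℕ) : F))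
    (fun p ↦ Λ ^ p.1 * ω ^ (j p.1 + p.2))
    (by
      rintro ⟨i, a⟩ hp ⟨i', a'⟩ hp' h
      simp only [Finset.coe_product, Set.mem_prod, Finset.mem_coe, Finset.mem_range] at hp hp'
      have h' : j i + a = j i' + a' := Nat.cast_injective h
      obtain ⟨h1, h2⟩ := hj i i' a a' hp.1 hp'.1 hp.2 hp'.2 h'
      rw [h1, h2])
    (fun p _ ↦ mul_ne_zero (pow_ne_zero _ hΛ) (pow_ne_zero _ hω0))
    (by simpa using hKL)
    (by
      rintro ⟨i, a⟩ hp e he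
      simp only [Finset.mem_product, Finset.mem_range] at hp
      have := hc (⟨i, hp.1⟩, ⟨a + e, by omega⟩)
      simp only [Matrix.of_apply, Fintype.sum_prod_type] at this
      rw [Finset.sum_comm] at this
      rw [← this]
      refine Finset.sum_congr rfl fun l _ ↦ ?_
      rw [← Nat.cast_add, hPe, Finset.sum_mul]
      refine Finset.sum_congr rfl fun k _ ↦ ?_
      rw [add_assoc, mul_assoc, mul_assoc (Λ ^ i), ← pow_add, add_assoc])
  have key : ∀ (l : Fin L) (n : ℕ) (hn : n < K), c (⟨n, hn⟩, l) = 0 := by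
    intro l n
    induction n using Nat.strong_induction_on with
    | _ n ih =>
      intro hn
      have h0 := hPe l n
      rw [hP l, eval_zero] at h0
      rw [Finset.sum_eq_single (⟨n, hn⟩ : Fin K)] at h0
      · simpa using h0.symm
      · intro k _ hk
        have hk' : (k : ℕ) ≠ n := fun h ↦ hk (Fin.ext h)
        rcases lt_or_gt_of_ne hk' with h | h
        · rw [ih k h k.2, zero_mul]
        · rw [Nat.choose_eq_zero_of_lt h]; simp
      · simp
  ext ⟨k, l⟩
  exact key l k k.2

lemma interp_small {F : Type*} [Field F] (v : AbsoluteValue F ℝ) (hv : IsNonarchimedean v)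
    (K L : ℕ) (Λ ω : F) (hL : 0 < L)
    (hΛ1 : v (Λ - 1) ≤ (1 / 2) ^ (K * L)) (hω1 : v (ω - 1) ≤ 1 / 2)
    (g J : Fin K × Fin L → ℕ) :
    v (Matrix.of fun (r : Fin K × Fin L) (c : Fin K × Fin L) ↦
        (((J c).choose r.1 : ℕ) : F) * (Λ ^ (g c) * ω ^ (J c)) ^ (r.2 : ℕ)).det *
      (1 / 2) ^ (∑ r : Fin K × Fin L, (r.1 : ℕ)) ≤ (1 / 2) ^ (K * L * (K * L - 1) / 2) := by
  classical
  rcases Nat.eq_zero_or_pos K with rfl | hK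
  · simp
  have hcard : Fintype.card (Fin K × Fin L) = K * L := by simp
  have vω : v ω = 1 := na_one_of_sub_lt v hv ω (by linarith)
  have vΛ : v Λ = 1 := na_one_of_sub_lt v hv Λ (by
    refine hΛ1.trans_lt (pow_lt_one₀ (by norm_num) (by norm_num) (Nat.mul_pos hK hL).ne'))
  let a : Fin K × Fin L → ℕ → F := fun r i ↦
    if (r.1 : ℕ) ≤ i then (i.choose r.1 : F) * (ω ^ (r.2 : ℕ)) ^ (r.1 : ℕ) *
      (ω ^ (r.2 : ℕ) - 1) ^ (i - r.1) else 0
  have ha : ∀ r i, v (a r i) * (1/2) ^ (r.1 : ℕ) ≤ (1/2) ^ i := by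
    intro r i
    simp only [a]
    split_ifs with h
    · rw [map_mul, map_mul, map_pow, map_pow, map_pow, vω, one_pow, one_pow, mul_one]
      have h1 := na_nat_le v hv (i.choose r.1)
      have h2 : v (ω ^ (r.2 : ℕ) - 1) ≤ 1 / 2 := (na_pow_sub_one v hv ω vω.le _).trans hω1
      calc v ((i.choose r.1 : ℕ) : F) * v (ω ^ (r.2 : ℕ) - 1) ^ (i - r.1) * (1 / 2) ^ (r.1 : ℕ)
          ≤ 1 * (1 / 2) ^ (i - r.1) * (1 / 2) ^ (r.1 : ℕ) := by
            gcongr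
        _ = (1 / 2) ^ i := by rw [one_mul, ← pow_add, Nat.sub_add_cancel h]
    · simp
  have hexp : ∀ r c, (((J c).choose r.1 : ℕ) : F) * (ω ^ (r.2 : ℕ)) ^ (J c) =
      ∑ i ∈ Finset.range (K * L), a r i * ((J c).choose i : F) +
      ∑ i ∈ Finset.range (J c + 1), a r (K * L + i) * ((J c).choose (K * L + i) : F) := by
    intro r c
    rw [newton_expand, ← Finset.sum_range_add (fun i ↦ a r i * ((J c).choose i : F))]
    refine Finset.sum_subset (fun x hx ↦ ?_) fun i _ hi ↦ ?_
    · simp only [Finset.mem_range] at hx ⊢; omega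
    · rw [Nat.choose_eq_zero_of_lt (show J c < i by simpa using hi)]; simp
  have := det_small v hv (Matrix.of fun (r : Fin K × Fin L) (c : Fin K × Fin L) ↦
        (((J c).choose r.1 : ℕ) : F) * (Λ ^ (g c) * ω ^ (J c)) ^ (r.2 : ℕ)) (fun r ↦ (r.1 : ℕ)) a
    (fun i c ↦ ((J c).choose i : F))
    (fun r c ↦ ∑ i ∈ Finset.range (J c + 1), a r (K * L + i) * ((J c).choose (K * L + i) : F) +
      (((J c).choose r.1 : ℕ) : F) * (ω ^ (r.2 : ℕ)) ^ (J c) * (Λ ^ (g c * r.2) - 1))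
    (fun r c ↦ by
      rw [hcard, ← add_assoc, ← hexp r c, Matrix.of_apply, mul_pow, ← pow_mul, ← pow_mul, ← pow_mul,
        mul_comm (J c) (r.2 : ℕ)]
      ring) ha (fun i c ↦ na_nat_le v hv _)
    (fun r c ↦ by
      rw [hcard]
      have hk : (r.1 : ℕ) ≤ K * L := r.1.2.le.trans (Nat.le_mul_of_pos_right K hL)
      have hb : ∀ i, v (a r (K * L + i)) ≤ (1 / 2) ^ (K * L - r.1) := by
        intro i
        have h1 := ha r (K * L + i)
        have h2 : ((1 : ℝ) / 2) ^ (K * L + i) ≤ (1 / 2) ^ (K * L - r.1) * (1 / 2) ^ (r.1 : ℕ) := by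
          rw [← pow_add, Nat.sub_add_cancel hk]
          exact pow_le_pow_of_le_one (by norm_num) (by norm_num) (by omega)
        exact le_of_mul_le_mul_right (h1.trans h2) (by positivity)
      have h3 : v (∑ i ∈ Finset.range (J c + 1), a r (K * L + i) * ((J c).choose (K * L + i) : F) +
        (((J c).choose r.1 : ℕ) : F) * (ω ^ (r.2 : ℕ)) ^ (J c) * (Λ ^ (g c * r.2) - 1)) ≤
          (1 / 2) ^ (K * L - r.1) := by
        refine (hv _ _).trans (max_le ?_ ?_)
        · refine na_sum_le v hv _ _ _ (by positivity) fun i _ ↦ ?_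
          rw [map_mul]
          exact (mul_le_of_le_one_right (v.nonneg _) (na_nat_le v hv _)).trans (hb i)
        · rw [map_mul, map_mul, map_pow, map_pow, vω, one_pow, one_pow, mul_one]
          refine (mul_le_of_le_one_left (v.nonneg _) (na_nat_le v hv _)).trans ?_
          refine (na_pow_sub_one v hv Λ vΛ.le _).trans (hΛ1.trans ?_)
          exact pow_le_pow_of_le_one (by norm_num) (by norm_num) (by omega)
      calc _ ≤ ((1 : ℝ) / 2) ^ (K * L - r.1) * (1 / 2) ^ (r.1 : ℕ) := by gcongr
        _ = _ := by rw [← pow_add, Nat.sub_add_cancel hk])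
  rw [hcard] at this
  exact this

end PartD


section PartE
open Height AdmissibleAbsValues

lemma core_bound {F : Type*} [Field F] [CharZero F] [AdmissibleAbsValues F]
    (v : AbsoluteValue F ℝ) (hvm : v ∈ nonarchAbsVal (K := F))
    (K L I A T : ℕ) (hK : 1 ≤ K) (hL : 1 ≤ L) (hT : 1 ≤ T) (Λ ω : F)
    (hΛ1 : v (Λ - 1) ≤ (1 / 2) ^ (K * L)) (hω1 : v (ω - 1) ≤ 1 / 2)
    (hω : ∀ l l', l < L → l' < L → ω ^ l = ω ^ l' → l = l')
    (j : ℕ → ℕ)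
    (hj : ∀ i i' a a', i < I → i' < I → a < A → a' < A → j i + a = j i' + a' → i = i' ∧ a = a')
    (hKL : K * L ≤ I * A) (hJ : ∀ i a, i < I → a < A + L → j i + a ≤ T * K)
    {ι : Type*} (s : Finset ι) (y : ι → F) (e : ι → ℕ)
    (hw : ∀ w : AbsoluteValue F ℝ, ∀ i < I, ∀ a < A + L,
      w (Λ ^ i * ω ^ (j i + a)) ≤ ∏ x ∈ s, max (w (y x)) 1 ^ e x) :
    ((K * L : ℝ) - K) / 2 * Real.log 2 ≤
      totalWeight F * (Real.log (K * L) + K * Real.log (3 * T)) +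
        L * ∑ x ∈ s, e x * logHeight₁ (y x) := by
  classical
  have hv : IsNonarchimedean v := isNonarchimedean v hvm
  have hN : 0 < K * L := Nat.mul_pos hK hL
  have vω : v ω = 1 := na_one_of_sub_lt v hv ω (by linarith)
  have vΛ : v Λ = 1 := na_one_of_sub_lt v hv Λ (by
    refine hΛ1.trans_lt (pow_lt_one₀ (by norm_num) (by norm_num) hN.ne'))
  have hω0 : ω ≠ 0 := fun h ↦ by simp [h] at vω
  have hΛ0 : Λ ≠ 0 := fun h ↦ by simp [h] at vΛ
  obtain ⟨f, hf⟩ := interp_nonzero K L I A Λ ω hΛ0 hω0 hω j hj hKL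
  set M := (Matrix.of fun (r : Fin K × Fin L) (c : Fin K × Fin L) ↦
        (((j (f c).1 + (f c).2).choose r.1 : ℕ) : F) *
          (Λ ^ ((f c).1 : ℕ) * ω ^ (j (f c).1 + (f c).2)) ^ (r.2 : ℕ)) with hMdef
  have hsmall := interp_small v hv K L Λ ω hL hΛ1 hω1 (fun c ↦ ((f c).1 : ℕ))
    (fun c ↦ j (f c).1 + (f c).2)
  rw [← hMdef] at hsmall
  have hcard : Fintype.card (Fin K × Fin L) = K * L := by simp
  have hT3 : (1 : ℝ) ≤ 3 * T := by
    have : (1 : ℝ) ≤ T := by exact_mod_cast hT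
    linarith
  have one_le : ∀ w : AbsoluteValue F ℝ, 1 ≤ ∏ i ∈ s, max (w (y i)) 1 ^ e i := fun w ↦
    Finset.one_le_prod fun _ _ ↦ one_le_pow₀ (le_max_right _ _)
  have hent : ∀ w : AbsoluteValue F ℝ, ∀ r c, w ((Λ ^ ((f c).1 : ℕ) *
      ω ^ (j (f c).1 + (f c).2)) ^ (r : ℕ)) ≤ (∏ i ∈ s, max (w (y i)) 1 ^ e i) ^ r := by
    intro w r c
    rw [map_pow]
    exact pow_le_pow_left₀ (w.nonneg _) (hw w _ (f c).1.2 _ (f c).2.2) _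
  have hh := height_bound s y (fun x ↦ e x * (L * (K * L))) M.det
    (((K * L).factorial : ℝ) * (3 * T : ℝ) ^ (K * (K * L)))
    (by
      refine one_le_mul_of_one_le_of_one_le ?_ (one_le_pow₀ hT3)
      exact_mod_cast Nat.factorial_pos _)
    (by
      intro w _
      have := abs_det_le w M ((3 * T : ℝ) ^ K * (∏ i ∈ s, max (w (y i)) 1 ^ e i) ^ L) (by
        intro r c
        simp only [hMdef, Matrix.of_apply, map_mul]
        refine mul_le_mul ?_ ?_ (w.nonneg _) (by positivity)
        · exact (AbsoluteValue.apply_nat_le_self w _).trans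
            (choose_bound T K _ _ hT r.1.2 (hJ _ _ (f c).1.2 (f c).2.2))
        · exact (hent w _ c).trans (pow_le_pow_right₀ (one_le w) r.2.2.le))
      rw [hcard] at this
      refine this.trans (le_of_eq ?_)
      rw [mul_pow, ← pow_mul, ← pow_mul, ← mul_assoc, ← Finset.prod_pow]
      simp only [pow_mul])
    (by
      intro w hwm
      have := na_det_le w (isNonarchimedean w hwm) M ((∏ i ∈ s, max (w (y i)) 1 ^ e i) ^ L)
        (by positivity) (by
        intro r c
        simp only [hMdef, Matrix.of_apply, map_mul]
        refine (mul_le_of_le_one_left (by positivity) 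
          (na_nat_le w (isNonarchimedean w hwm) _)).trans ?_
        exact (hent w _ c).trans (pow_le_pow_right₀ (one_le w) r.2.2.le))
      rw [hcard] at this
      refine this.trans (le_of_eq ?_)
      rw [← pow_mul, ← Finset.prod_pow]
      simp only [pow_mul])
  have hli := liouville_nonarch M.det hf v hvm
  set S := ∑ r : Fin K × Fin L, (r.1 : ℕ) with hS
  set D := K * L * (K * L - 1) / 2 with hD
  set X := mulHeight₁ M.det
  have hX : 0 < X := mulHeight₁_pos _
  have h1 : ((1 : ℝ) / 2) ^ S ≤ X * (1 / 2) ^ D := by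
    calc ((1 : ℝ) / 2) ^ S ≤ (X * v M.det) * (1 / 2) ^ S := le_mul_of_one_le_left (by positivity) hli
      _ = X * (v M.det * (1 / 2) ^ S) := by ring
      _ ≤ _ := by gcongr
  have h2 := Real.log_le_log (by positivity) h1
  rw [Real.log_mul hX.ne' (by positivity), Real.log_pow, Real.log_pow, one_div, Real.log_inv] at h2
  have h3 := Real.log_le_log hX hh
  have hfac : Real.log ((K * L).factorial : ℝ) ≤ (K * L : ℝ) * Real.log (K * L) := by
    have : ((K * L).factorial : ℝ) ≤ ((K * L : ℕ) : ℝ) ^ (K * L) := by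
      exact_mod_cast Nat.factorial_le_pow (K * L)
    have := Real.log_le_log (by exact_mod_cast Nat.factorial_pos _) this
    rw [Real.log_pow] at this
    exact_mod_cast this
  have hprod : (0 : ℝ) < ∏ i ∈ s, mulHeight₁ (y i) ^ (e i * (L * (K * L))) :=
    Finset.prod_pos fun i _ ↦ pow_pos (mulHeight₁_pos _) _
  have hfp : (0 : ℝ) < ((K * L).factorial : ℝ) := by exact_mod_cast Nat.factorial_pos _
  have hTp : (0 : ℝ) < 3 * T := by linarith
  rw [Real.log_mul (by positivity) hprod.ne', Real.log_pow, Real.log_mul (by positivity)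
    (by positivity), Real.log_pow, Real.log_prod (fun i _ ↦ (pow_pos (mulHeight₁_pos _) _).ne')] at h3
  simp only [Real.log_pow, ← logHeight₁_eq_log_mulHeight₁] at h3
  have hSr : (S : ℝ) = L * K * (K - 1) / 2 := by
    have h5 : S * 2 = L * (K * (K - 1)) := by
      rw [hS, Fintype.sum_prod_type]
      simp only [Finset.sum_const, Finset.card_univ, Fintype.card_fin, smul_eq_mul]
      rw [← Finset.mul_sum, Fin.sum_univ_eq_sum_range (fun i ↦ i) K, mul_assoc,
        Finset.sum_range_id_mul_two]
    have h6 : ((S * 2 : ℕ) : ℝ) = ((L * (K * (K - 1)) : ℕ) : ℝ) := by rw [h5]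
    push_cast [Nat.cast_sub hK] at h6
    linarith
  have hDr : (D : ℝ) = K * L * (K * L - 1) / 2 := by
    have h5 : D * 2 = K * L * (K * L - 1) := by
      rw [hD]; exact Nat.div_mul_cancel (Nat.even_mul_pred_self _).two_dvd
    have h6 : ((D * 2 : ℕ) : ℝ) = ((K * L * (K * L - 1) : ℕ) : ℝ) := by rw [h5]
    rw [Nat.cast_mul, Nat.cast_mul, Nat.cast_sub hN] at h6
    push_cast at h6
    linarith
  rw [hSr, hDr] at h2
  have hNr : (0 : ℝ) < K * L := by exact_mod_cast hN
  have hsum : ∑ x ∈ s, ((e x * (L * (K * L)) : ℕ) : ℝ) * logHeight₁ (y x) =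
      (K * L : ℝ) * (L * ∑ x ∈ s, e x * logHeight₁ (y x)) := by
    rw [Finset.mul_sum, Finset.mul_sum]
    refine Finset.sum_congr rfl fun x _ ↦ ?_
    push_cast; ring
  rw [hsum] at h3
  push_cast at h3
  have htw : (totalWeight F : ℝ) * Real.log ((K * L).factorial : ℝ) ≤
      totalWeight F * ((K * L : ℝ) * Real.log (K * L)) :=
    mul_le_mul_of_nonneg_left hfac (Nat.cast_nonneg _)
  refine le_of_mul_le_mul_left ?_ hNr
  nlinarith

end PartE


section PartF

lemma simult_approx {ι : Type*} [Fintype ι] (n Q : ℕ) (hn : 0 < n) (hQ : 0 < Q) (b : ι → ℕ)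
    (hb : ∀ t, b t < n) :
    ∃ q : ℕ, 1 ≤ q ∧ q ≤ Q ^ Fintype.card ι ∧ ∃ p : ι → ℕ, ∀ t, p t ≤ q ∧
      |(q * b t : ℤ) - n * p t| * Q ≤ n := by
  classical
  have hlt : ∀ (m : ℕ) t, Q * ((m * b t) % n) / n < Q := fun m t ↦ by
    rw [Nat.div_lt_iff_lt_mul hn]
    exact Nat.mul_lt_mul_of_pos_left (Nat.mod_lt _ hn) hQ
  let φ : ℕ → (ι → Fin Q) := fun m t ↦ ⟨Q * ((m * b t) % n) / n, hlt m t⟩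
  obtain ⟨m, hm, m', hm', hne, heq⟩ := Finset.exists_ne_map_eq_of_card_lt_of_maps_to
    (s := Finset.range (Q ^ Fintype.card ι + 1)) (t := (Finset.univ : Finset (ι → Fin Q)))
    (by simp) (f := φ) (fun _ _ ↦ Finset.mem_univ _)
  wlog hmm : m < m' generalizing m m'
  · exact this m' hm' m hm hne.symm heq.symm (by omega)
  simp only [Finset.mem_range] at hm hm'
  refine ⟨m' - m, by omega, by omega, fun t ↦ m' * b t / n - m * b t / n, fun t ↦ ?_⟩
  beta_reduce
  have h1 : Q * ((m * b t) % n) / n = Q * ((m' * b t) % n) / n := by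
    have := congrFun heq t
    simpa [φ] using this
  have e1 := Nat.div_add_mod (m * b t) n
  have e2 := Nat.div_add_mod (m' * b t) n
  have l1 := Nat.mod_lt (m * b t) hn
  have l2 := Nat.mod_lt (m' * b t) hn
  have hmono : m * b t / n ≤ m' * b t / n := Nat.div_le_div_right (Nat.mul_le_mul_right _ hmm.le)
  have f1 := Nat.div_add_mod (Q * ((m * b t) % n)) n
  have f2 := Nat.div_add_mod (Q * ((m' * b t) % n)) n
  have g1 := Nat.mod_lt (Q * ((m * b t) % n)) hn
  have g2 := Nat.mod_lt (Q * ((m' * b t) % n)) hn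
  rw [← h1] at f2
  have hbt := hb t
  generalize m * b t / n = u at *
  generalize m' * b t / n = u' at *
  generalize (m * b t) % n = x at *
  generalize (m' * b t) % n = x' at *
  generalize Q * x / n = y at *
  generalize Q * x % n = z at *
  generalize Q * x' % n = z' at *
  obtain ⟨d, rfl⟩ := Nat.exists_eq_add_of_lt hmm
  obtain ⟨p, rfl⟩ := Nat.exists_eq_add_of_le hmono
  have s1 : m + d + 1 - m = d + 1 := by omega
  have s2 : u + p - u = p := by omega
  rw [s1, s2]
  clear heq hne hmm hmono h1 hlt s1 s2 hm hm' φ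
  zify at *
  have k1 : ((d : ℤ) + 1) * b t - n * p = x' - x := by
    push_cast at e2; linarith
  constructor
  · by_contra hcon
    have : (d : ℤ) + 2 ≤ p := by
      push_cast at hcon; linarith
    have h3 : (n : ℤ) * (d + 2) ≤ n * p := mul_le_mul_of_nonneg_left this (by positivity)
    have h4 : ((d : ℤ) + 1) * b t ≤ (d + 1) * n := mul_le_mul_of_nonneg_left hbt.le (by positivity)
    have h5 : (0 : ℤ) ≤ x' := by positivity
    linarith
  · push_cast
    rw [k1]
    have : |(x' : ℤ) - x| * Q = |(z' : ℤ) - z| := by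
      rw [show (Q : ℤ) = |(Q : ℤ)| from (abs_of_nonneg (by positivity)).symm, ← abs_mul]
      congr 1
      linarith
    rw [this, abs_le]
    have h5 : (0 : ℤ) ≤ z' := by positivity
    have h6 : (0 : ℤ) ≤ z := by positivity
    constructor <;> linarith

end PartF


section PartG
open Height AdmissibleAbsValues

lemma ou_mul {F : Type*} [Field F] (v : AbsoluteValue F ℝ) (hv : IsNonarchimedean v)
    {x y : F} (hx : v (x - 1) ≤ 1 / 2) (hy : v (y - 1) ≤ 1 / 2) : v (x * y - 1) ≤ 1 / 2 := by
  have vx : v x = 1 := na_one_of_sub_lt v hv x (by linarith)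
  have := hv (x * (y - 1)) (x - 1)
  rw [map_mul, vx, one_mul] at this
  rw [show x * y - 1 = x * (y - 1) + (x - 1) by ring]
  exact this.trans (max_le hy hx)

lemma ou_inv {F : Type*} [Field F] (v : AbsoluteValue F ℝ) (hv : IsNonarchimedean v)
    {x : F} (hx : v (x - 1) ≤ 1 / 2) : v (x⁻¹ - 1) ≤ 1 / 2 := by
  have vx : v x = 1 := na_one_of_sub_lt v hv x (by linarith)
  have hx0 : x ≠ 0 := fun h ↦ by simp [h] at vx
  rw [show x⁻¹ - 1 = x⁻¹ * -(x - 1) by field_simp; ring, map_mul, map_inv₀, vx, v.map_neg]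
  simpa using hx

/-- the subgroup of units close to one -/
def ouSub {F : Type*} [Field F] (v : AbsoluteValue F ℝ) (hv : IsNonarchimedean v) :
    Subgroup Fˣ where
  carrier := {x | v ((x : F) - 1) ≤ 1 / 2}
  mul_mem' := fun {a b} ha hb ↦ by
    have := ou_mul v hv ha hb
    simpa using this
  one_mem' := by simp
  inv_mem' := fun {a} ha ↦ by
    have := ou_inv v hv ha
    simpa using this

lemma mem_ouSub {F : Type*} [Field F] (v : AbsoluteValue F ℝ) (hv : IsNonarchimedean v) (x : Fˣ) :
    x ∈ ouSub v hv ↔ v ((x : F) - 1) ≤ 1 / 2 := Iff.rfl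

lemma grp_id {G ι : Type*} [CommGroup G] [Fintype ι] (g : ι → G) (γ : G) (b p : ι → ℕ)
    (n q i J : ℕ) :
    ((∏ t, g t ^ b t) * γ ^ n) ^ i * ((γ ^ q * ∏ t, g t ^ p t)⁻¹) ^ J =
      γ ^ ((n * i : ℤ) - q * J) * ∏ t, g t ^ ((b t * i : ℤ) - p t * J) := by
  simp only [zpow_sub, zpow_mul, zpow_natCast, mul_pow, inv_pow]
  rw [Finset.prod_mul_distrib, Finset.prod_inv_distrib, Finset.prod_pow, Finset.prod_pow, mul_inv]
  ac_rfl

lemma abv_zpow_le {F : Type*} [Field F] (w : AbsoluteValue F ℝ) (x : F) (m : ℤ) (N : ℕ)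
    (h : |m| ≤ N) : w (x ^ m) ≤ max (w x) 1 ^ N * max (w x⁻¹) 1 ^ N := by
  have h1 : (1 : ℝ) ≤ max (w x) 1 := le_max_right _ _
  have h2 : (1 : ℝ) ≤ max (w x⁻¹) 1 := le_max_right _ _
  obtain ⟨k, rfl | rfl⟩ := m.eq_nat_or_neg
  · have hk : k ≤ N := by simpa using h
    rw [zpow_natCast, map_pow]
    calc w x ^ k ≤ max (w x) 1 ^ k := pow_le_pow_left₀ (w.nonneg _) (le_max_left _ _) _
      _ ≤ max (w x) 1 ^ N := pow_le_pow_right₀ h1 hk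
      _ ≤ _ := le_mul_of_one_le_right (by positivity) (one_le_pow₀ h2)
  · have hk : k ≤ N := by simpa using h
    rw [zpow_neg, zpow_natCast, ← inv_pow, map_pow]
    calc w x⁻¹ ^ k ≤ max (w x⁻¹) 1 ^ k := pow_le_pow_left₀ (w.nonneg _) (le_max_left _ _) _
      _ ≤ max (w x⁻¹) 1 ^ N := pow_le_pow_right₀ h2 hk
      _ ≤ _ := le_mul_of_one_le_left (by positivity) (one_le_pow₀ h1)

set_option maxHeartbeats 1600000 in
lemma nondeg_case {F : Type*} [Field F] [CharZero F] [AdmissibleAbsValues F]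
    (v : AbsoluteValue F ℝ) (hvm : v ∈ nonarchAbsVal (K := F))
    {ι : Type*} [Fintype ι] (g : ι → Fˣ) (hg : ∀ t, v ((g t : F) - 1) ≤ 1 / 2)
    (h0 : ℕ) (hh0 : ∑ t, logHeight₁ (g t : F) ≤ h0) (c L : ℕ) (hc : c = 40 * (4 + 6 * h0))
    (hL1 : 2 ≤ L) (hL2 : 2 * c ≤ L ^ 2)
    (hLbig : totalWeight F * (1 + Real.log 3 + 4 * Real.log L) + L / 40 < 3 / 10 * ((L : ℝ) - 1))
    (n q : ℕ) (hq : 1 ≤ q) (hn : L ^ 3 * q ≤ n) (b p : ι → ℕ)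
    (hp : ∀ t, p t ≤ q ∧ |(q * b t : ℤ) - n * p t| * (L ^ 3 : ℕ) ≤ n)
    (γ : Fˣ) (hγ : v ((γ : F) - 1) ≤ 1 / 2) (H : ℕ) (hH1 : 1 ≤ H) (hH : logHeight₁ (γ : F) ≤ H)
    (hω : ∀ l l', l < L → l' < L → (γ ^ q * ∏ t, g t ^ p t) ^ l = (γ ^ q * ∏ t, g t ^ p t) ^ l' →
      l = l')
    (M : ℕ) (hM : v ((((∏ t, g t ^ b t) * γ ^ n : Fˣ) : F) - 1) ≤ (1 / 2) ^ M) :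
    (M * L : ℝ) ≤ 2 * c ^ 2 * H * n := by
  classical
  have hv : IsNonarchimedean v := isNonarchimedean v hvm
  obtain ⟨Q, hQ⟩ : ∃ Q, Q = L ^ 3 := ⟨_, rfl⟩
  rw [← hQ] at hn hp
  have hc160 : 160 ≤ c := by omega
  have hQ8 : 8 ≤ Q := by
    rw [hQ]; calc 8 = 2 ^ 3 := by norm_num
      _ ≤ L ^ 3 := Nat.pow_le_pow_left hL1 3
  have hQcL : 2 * c * L ≤ Q := by
    rw [hQ, pow_succ]; exact Nat.mul_le_mul_right _ hL2
  obtain ⟨A, hA⟩ : ∃ A, A = c * L * n / (Q * q) + 1 := ⟨_, rfl⟩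
  have hQq : 0 < Q * q := Nat.mul_pos (by omega) hq
  have hn0 : 0 < n := lt_of_lt_of_le hQq hn
  have hA1 : c * L * n < Q * q * A := by
    rw [hA]; exact Nat.lt_mul_div_succ _ hQq
  have hncL : n ≤ c * L * n := Nat.le_mul_of_pos_left _ (Nat.mul_pos (by omega) (by omega))
  have hA2 : Q * q * A ≤ 2 * (c * L * n) := by
    rw [hA, mul_add, mul_one]
    have := Nat.mul_div_le (c * L * n) (Q * q)
    omega
  have hAq : A * q ≤ n := by
    have h1 : 2 * (c * L * n) ≤ Q * n := by
      calc 2 * (c * L * n) = 2 * c * L * n := by ring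
        _ ≤ Q * n := Nat.mul_le_mul_right _ hQcL
    have h2 : Q * (A * q) ≤ Q * n := by
      calc Q * (A * q) = Q * q * A := by ring
        _ ≤ Q * n := hA2.trans h1
    exact Nat.le_of_mul_le_mul_left h2 (by omega)
  have hLA : L ≤ A := by
    by_contra! hcon
    have h1 : Q * q * A ≤ Q * q * L := Nat.mul_le_mul_left _ hcon.le
    have h2 : Q * q * L ≤ n * L := Nat.mul_le_mul_right _ hn
    have h3 : n * L ≤ c * L * n := by
      calc n * L ≤ c * (n * L) := Nat.le_mul_of_pos_left _ (by omega)
        _ = c * L * n := by ring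
    omega
  have hA0 : 1 ≤ A := by omega
  obtain ⟨K, hK⟩ : ∃ K, K = c * q * H * A := ⟨_, rfl⟩
  obtain ⟨I, hI⟩ : ∃ I, I = c * q * H * L := ⟨_, rfl⟩
  have hK1 : 1 ≤ K := by
    rw [hK]; exact Nat.mul_pos (Nat.mul_pos (Nat.mul_pos (by omega) hq) hH1) hA0
  have hnI : n * I ≤ q * H * (Q * q * A) := by
    rw [hI]
    calc n * (c * q * H * L) = q * H * (c * L * n) := by ring
      _ ≤ _ := Nat.mul_le_mul_left _ hA1.le
  by_contra! hcon
  have hMN : K * L ≤ M := by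
    have h1 : (K * L * L : ℝ) ≤ 2 * c ^ 2 * H * n := by
      have h2 : Q * (K * L * L) ≤ Q * (2 * c ^ 2 * H * n) := by
        calc Q * (K * L * L) = c * H * L * L * (Q * q * A) := by rw [hK]; ring
          _ ≤ c * H * L * L * (2 * (c * L * n)) := Nat.mul_le_mul_left _ hA2
          _ = Q * (2 * c ^ 2 * H * n) := by rw [hQ]; ring
      exact_mod_cast Nat.le_of_mul_le_mul_left h2 (by omega)
    have h3 : ((K * L * L : ℕ) : ℝ) < ((M * L : ℕ) : ℝ) := by push_cast; linarith
    have h4 : K * L * L < M * L := by exact_mod_cast h3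
    exact (Nat.lt_of_mul_lt_mul_right h4).le
  have hM' : v ((((∏ t, g t ^ b t) * γ ^ n : Fˣ) : F) - 1) ≤ (1 / 2) ^ (K * L) :=
    hM.trans (pow_le_pow_of_le_one (by norm_num) (by norm_num) hMN)
  set α : Fˣ := γ ^ q * ∏ t, g t ^ p t with hα
  have hα1 : v (((α⁻¹ : Fˣ) : F) - 1) ≤ 1 / 2 := by
    rw [← mem_ouSub v hv]
    refine inv_mem (mul_mem (pow_mem hγ _) (prod_mem fun t _ ↦ pow_mem (hg t) _))
  have hdiff1 : ∀ i < I, ∀ a < A + L, |((n * i : ℤ) - q * (n * i / q + a : ℕ))| ≤ (2 * q * A : ℕ) := by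
    intro i _ a ha
    have e1 := Nat.div_add_mod (n * i) q
    have e2 := Nat.mod_lt (n * i) hq
    have h1 : q * (a + 1) ≤ q * (2 * A) := Nat.mul_le_mul_left _ (by omega)
    zify at e1 e2 h1
    rw [abs_le]
    push_cast
    have h3 : (0 : ℤ) ≤ (n * i : ℤ) % q := Int.emod_nonneg _ (by positivity)
    have h4 : (0 : ℤ) ≤ q * a := by positivity
    constructor <;> nlinarith
  have hdiff2 : ∀ i < I, ∀ a < A + L, ∀ t, |((b t * i : ℤ) - p t * (n * i / q + a : ℕ))| ≤
      (3 * H * q * A : ℕ) := by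
    intro i hi a ha t
    have h1 := hdiff1 i hi a ha
    obtain ⟨h2, h3⟩ := hp t
    generalize n * i / q + a = J at *
    have hQq' : (0 : ℤ) < Q * q := by exact_mod_cast hQq
    refine le_of_mul_le_mul_left ?_ hQq'
    have e1 : (Q * q : ℤ) * |(b t * i : ℤ) - p t * J| =
        |((q * b t : ℤ) - n * p t) * Q * i + Q * p t * (n * i - q * J)| := by
      rw [← abs_of_pos hQq', ← abs_mul]
      congr 1; ring
    rw [e1]
    have e2 : |((q * b t : ℤ) - n * p t) * Q * i| ≤ n * I := by
      rw [abs_mul, abs_mul, Nat.abs_cast, Nat.abs_cast]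
      exact mul_le_mul h3 (by exact_mod_cast hi.le) (by positivity) (by positivity)
    have e3 : |(Q * p t : ℤ) * (n * i - q * J)| ≤ Q * q * (2 * q * A : ℕ) := by
      rw [abs_mul, abs_mul, Nat.abs_cast, Nat.abs_cast]
      refine mul_le_mul ?_ h1 (by positivity) (by positivity)
      exact_mod_cast Nat.mul_le_mul_left _ h2
    refine (abs_add_le _ _).trans ((add_le_add e2 e3).trans ?_)
    have e4 : n * I + Q * q * (2 * q * A) ≤ Q * q * (3 * H * q * A) := by
      have : Q * q * (2 * q * A) * 1 ≤ Q * q * (2 * q * A) * H := Nat.mul_le_mul_left _ hH1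
      calc n * I + Q * q * (2 * q * A) ≤ q * H * (Q * q * A) + Q * q * (2 * q * A) * H := by omega
        _ = _ := by ring
    exact_mod_cast e4
  let Y : Option ι → F := fun x ↦ x.elim (γ : F) (fun t ↦ (g t : F))
  let ε : Option ι → ℕ := fun x ↦ x.elim (2 * q * A) (fun _ ↦ 3 * H * q * A)
  have hcore := core_bound v hvm K L I A Q hK1 (by omega) (by omega)
    (((∏ t, g t ^ b t) * γ ^ n : Fˣ) : F) ((α⁻¹ : Fˣ) : F) hM' hα1
    (by
      intro l l' hl hl' h
      rw [← Units.val_pow_eq_pow_val, ← Units.val_pow_eq_pow_val] at h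
      have h' := Units.ext h
      rw [inv_pow, inv_pow, inv_inj] at h'
      exact hω l l' hl hl' h')
    (fun i ↦ n * i / q)
    (by
      have key : ∀ i i' a a', i < i' → a < A → n * i / q + a ≠ n * i' / q + a' := by
        intro i i' a a' hii ha
        have h1 : n * i / q + A ≤ n * i' / q := by
          rw [← Nat.add_mul_div_right _ _ hq]
          apply Nat.div_le_div_right
          calc n * i + A * q ≤ n * i + n := by omega
            _ = n * (i + 1) := by ring
            _ ≤ n * i' := Nat.mul_le_mul_left _ hii
        omega
      intro i i' a a' _ _ ha ha' h
      rcases lt_trichotomy i i' with h1 | h1 | h1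
      · exact absurd h (key _ _ _ _ h1 ha)
      · subst h1; exact ⟨rfl, by omega⟩
      · exact absurd h.symm (key _ _ _ _ h1 ha'))
    (by rw [hK, hI]; apply le_of_eq; ring)
    (by
      intro i a hi ha
      have h1 : n * i / q ≤ H * (Q * q * A) := by
        have : n * i ≤ q * (H * (Q * q * A)) := by
          calc n * i ≤ n * I := Nat.mul_le_mul_left _ hi.le
            _ ≤ _ := hnI
            _ = _ := by ring
        calc n * i / q ≤ q * (H * (Q * q * A)) / q := Nat.div_le_div_right this
          _ = _ := Nat.mul_div_cancel_left _ hq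
      have h2 : 2 * A ≤ H * (Q * q * A) := by
        have : 2 ≤ H * (Q * q) := by
          calc 2 ≤ 1 * (8 * 1) := by norm_num
            _ ≤ H * (Q * q) := Nat.mul_le_mul hH1 (Nat.mul_le_mul hQ8 hq)
        calc 2 * A ≤ H * (Q * q) * A := Nat.mul_le_mul_right _ this
          _ = _ := by ring
      calc n * i / q + a ≤ 2 * (H * (Q * q * A)) := by omega
        _ ≤ c * (H * (Q * q * A)) := Nat.mul_le_mul_right _ (by omega)
        _ = Q * K := by rw [hK]; ring)
    (Finset.univ : Finset (Option ι × Bool))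
    (fun x ↦ if x.2 then Y x.1 else (Y x.1)⁻¹) (fun x ↦ ε x.1)
    (by
      intro w i hi a ha
      rw [← Units.val_pow_eq_pow_val, ← Units.val_pow_eq_pow_val, ← Units.val_mul, hα, grp_id]
      simp only [Fintype.prod_prod_type, Fintype.prod_bool, Fintype.prod_option, Y, ε]
      simp only [Units.val_mul, Units.coe_prod, Units.val_zpow_eq_zpow_val, map_mul, map_prod]
      refine mul_le_mul ?_ ?_ (Finset.prod_nonneg fun _ _ ↦ w.nonneg _) (by positivity)
      · simpa using abv_zpow_le w (γ : F) _ _ (hdiff1 i hi a ha)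
      · refine Finset.prod_le_prod (fun _ _ ↦ w.nonneg _) fun t _ ↦ ?_
        simpa using abv_zpow_le w (g t : F) _ _ (hdiff2 i hi a ha t))
  have hsum : ∑ x : Option ι × Bool, (ε x.1 : ℝ) * logHeight₁ (if x.2 then Y x.1 else (Y x.1)⁻¹) =
      2 * (2 * q * A) * logHeight₁ (γ : F) + 2 * (3 * H * q * A) * ∑ t, logHeight₁ (g t : F) := by
    simp only [Fintype.sum_prod_type, Fintype.sum_bool, Fintype.sum_option, Y, ε, if_true,
      Bool.false_eq_true, if_false, logHeight₁_inv, Option.elim_none, Option.elim_some]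
    rw [Finset.mul_sum]
    congr 1
    · push_cast; ring
    · refine Finset.sum_congr rfl fun t _ ↦ ?_
      push_cast; ring
  rw [hsum] at hcore
  have hKr : (1 : ℝ) ≤ K := by exact_mod_cast hK1
  have hLr : (2 : ℝ) ≤ L := by exact_mod_cast hL1
  have hb1 : 2 * (2 * q * A) * logHeight₁ (γ : F) + 2 * (3 * H * q * A) * ∑ t, logHeight₁ (g t : F)
      ≤ (K : ℝ) / 40 := by
    have e1 : (2 * (2 * q * A) : ℝ) * logHeight₁ (γ : F) ≤ 2 * (2 * q * A) * H := by gcongr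
    have e2 : (2 * (3 * H * q * A) : ℝ) * ∑ t, logHeight₁ (g t : F) ≤ 2 * (3 * H * q * A) * h0 := by
      gcongr
    have e3 : (K : ℝ) = 40 * (4 + 6 * h0) * q * H * A := by rw [hK, hc]; push_cast; ring
    rw [e3]
    linarith
  have hlogK : Real.log K ≤ K := (Real.log_le_sub_one_of_pos (by linarith)).trans (by linarith)
  have hlogL : 0 ≤ Real.log L := Real.log_nonneg (by linarith)
  have hlogKL : Real.log (K * L) ≤ K + K * Real.log L := by
    rw [Real.log_mul (by linarith) (by linarith)]
    have := mul_nonneg (show (0 : ℝ) ≤ K - 1 by linarith) hlogL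
    linarith
  have hlogQ : Real.log (3 * Q) = Real.log 3 + 3 * Real.log L := by
    rw [hQ, Real.log_mul (by norm_num) (by positivity)]
    push_cast
    rw [Real.log_pow]; norm_num
  rw [hlogQ] at hcore
  have h9 : ((K * L : ℝ) - K) / 2 * Real.log 2 ≤
      totalWeight F * (K + K * Real.log L + K * (Real.log 3 + 3 * Real.log L)) + L * (K / 40) := by
    refine hcore.trans (add_le_add ?_ ?_)
    · gcongr
    · gcongr
  have hl2 : (6 / 10 : ℝ) ≤ Real.log 2 := by have := Real.log_two_gt_d9; linarith
  have h10 : ((K * L : ℝ) - K) / 2 * (6 / 10) ≤ ((K * L : ℝ) - K) / 2 * Real.log 2 := by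
    apply mul_le_mul_of_nonneg_left hl2
    have := mul_nonneg (show (0 : ℝ) ≤ K by linarith) (show (0 : ℝ) ≤ L - 1 by linarith)
    linarith
  have h11 := mul_lt_mul_of_pos_left hLbig (show (0 : ℝ) < K by linarith)
  linarith

end PartG


section PartH
open Height AdmissibleAbsValues

lemma liou_one {F : Type*} [Field F] [AdmissibleAbsValues F]
    (v : AbsoluteValue F ℝ) (hvm : v ∈ nonarchAbsVal (K := F)) (x : F) (hx : x ≠ 1) (M : ℕ)
    (hM : v (x - 1) ≤ (1 / 2) ^ M) :
    M * Real.log 2 ≤ totalWeight F * Real.log 2 + logHeight₁ x := by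
  have h1 := liouville_nonarch (x - 1) (sub_ne_zero.2 hx) v hvm
  have h2 : 1 ≤ mulHeight₁ (x - 1) * (1 / 2) ^ M :=
    h1.trans (mul_le_mul_of_nonneg_left hM (mulHeight₁_pos _).le)
  have h3 := Real.log_le_log one_pos h2
  rw [Real.log_one, Real.log_mul (mulHeight₁_pos _).ne' (by positivity), Real.log_pow,
    ← logHeight₁_eq_log_mulHeight₁, one_div, Real.log_inv] at h3
  have h4 := logHeight₁_sub_le x 1
  rw [logHeight₁_one] at h4
  linarith

lemma grp_id2 {G ι : Type*} [CommGroup G] [Fintype ι] (g : ι → G) (γ : G) (b p : ι → ℕ)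
    (n q m : ℕ) (h : (γ ^ q * ∏ t, g t ^ p t) ^ m = 1) :
    ((∏ t, g t ^ b t) * γ ^ n) ^ (q * m) = ∏ t, g t ^ (((q * b t : ℤ) - n * p t) * m) := by
  have h2 : ((γ ^ q * ∏ t, g t ^ p t) ^ m) ^ n = 1 := by rw [h, one_pow]
  refine Eq.trans ?_ (mul_one _)
  rw [← h2]
  simp only [sub_mul, zpow_sub, zpow_mul, zpow_natCast, mul_pow, ← pow_mul,
    Finset.prod_mul_distrib, Finset.prod_inv_distrib, ← Finset.prod_pow]
  have e1 : ∏ t, g t ^ (p t * m * n) = ∏ t, g t ^ (n * p t * m) :=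
    Finset.prod_congr rfl fun t _ ↦ by congr 1; ring
  have e2 : ∏ t, g t ^ (b t * (q * m)) = ∏ t, g t ^ (q * b t * m) :=
    Finset.prod_congr rfl fun t _ ↦ by congr 1; ring
  have e3 : γ ^ (n * (q * m)) = γ ^ (q * m * n) := by congr 1; ring
  rw [e1, e2, e3]
  generalize ∏ t, g t ^ (q * b t * m) = X
  generalize ∏ t, g t ^ (n * p t * m) = Y
  generalize γ ^ (q * m * n) = Z
  rw [mul_comm Z Y, ← mul_assoc, mul_assoc X, inv_mul_cancel, mul_one]

lemma deg_case {F : Type*} [Field F] [CharZero F] [AdmissibleAbsValues F]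
    (v : AbsoluteValue F ℝ) (hvm : v ∈ nonarchAbsVal (K := F))
    {ι : Type*} [Fintype ι] (g : ι → Fˣ) (hg : ∀ t, v ((g t : F) - 1) ≤ 1 / 2)
    (h0 : ℕ) (hh0 : ∑ t, logHeight₁ (g t : F) ≤ h0) (L : ℕ)
    (hL1 : 2 ≤ L)
    (n q : ℕ) (hq : 1 ≤ q) (hn : totalWeight F * L ≤ n) (b p : ι → ℕ)
    (hp : ∀ t, p t ≤ q ∧ |(q * b t : ℤ) - n * p t| * (L ^ 3 : ℕ) ≤ n)
    (γ : Fˣ) (hγ : v ((γ : F) - 1) ≤ 1 / 2) (m : ℕ) (hm : 0 < m) (hmL : m < L)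
    (hα : (γ ^ q * ∏ t, g t ^ p t) ^ m = 1)
    (M : ℕ) (hΛ : ((∏ t, g t ^ b t) * γ ^ n : Fˣ) ≠ 1)
    (hM : v ((((∏ t, g t ^ b t) * γ ^ n : Fˣ) : F) - 1) ≤ (1 / 2) ^ M) :
    (M * L : ℝ) ≤ (1 + 2 * h0) * n := by
  have hv : IsNonarchimedean v := isNonarchimedean v hvm
  set Λ : Fˣ := (∏ t, g t ^ b t) * γ ^ n with hΛd
  have hΛ1 : v ((Λ : F) - 1) ≤ 1 / 2 := by
    rw [← mem_ouSub v hv]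
    exact mul_mem (prod_mem fun t _ ↦ pow_mem (hg t) _) (pow_mem hγ _)
  have hvΛ : v (Λ : F) = 1 := na_one_of_sub_lt v hv _ (by linarith)
  have hl2 : (1 / 2 : ℝ) ≤ Real.log 2 := by have := Real.log_two_gt_d9; linarith
  have hLr : (2 : ℝ) ≤ L := by exact_mod_cast hL1
  have hnr : (totalWeight F * L : ℝ) ≤ n := by exact_mod_cast hn
  by_cases h1 : Λ ^ (q * m) = 1
  · have h2 : logHeight₁ ((Λ : F) ^ (q * m)) = 0 := by
      rw [← Units.val_pow_eq_pow_val, h1]; simp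
    rw [logHeight₁_pow] at h2
    have h3 : logHeight₁ (Λ : F) = 0 := by
      rcases mul_eq_zero.1 h2 with h | h
      · have : q * m = 0 := by exact_mod_cast h
        have := Nat.mul_pos hq hm
        omega
      · exact h
    have h4 := liou_one v hvm (Λ : F) (by simpa using hΛ) M hM
    rw [h3, add_zero] at h4
    have h5 := le_of_mul_le_mul_right h4 (by linarith)
    have h6 : (M * L : ℝ) ≤ totalWeight F * L := by gcongr
    have : (0 : ℝ) ≤ 2 * h0 * n := by positivity
    linarith
  · have h2 : v ((Λ : F) ^ (q * m) - 1) ≤ (1 / 2) ^ M :=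
      (na_pow_sub_one v hv _ hvΛ.le _).trans hM
    have h4 := liou_one v hvm ((Λ : F) ^ (q * m))
      (fun h ↦ h1 (Units.ext (by rw [Units.val_pow_eq_pow_val, h, Units.val_one]))) M h2
    have h5 : logHeight₁ ((Λ : F) ^ (q * m)) * L ≤ h0 * n := by
      rw [← Units.val_pow_eq_pow_val, hΛd, grp_id2 g γ b p n q m hα, Units.coe_prod]
      have h6 : ∀ t, logHeight₁ (((g t ^ (((q * b t : ℤ) - n * p t) * m) : Fˣ)) : F) * L ≤
          n * logHeight₁ (g t : F) := by
        intro t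
        rw [Units.val_zpow_eq_zpow_val, logHeight₁_zpow, mul_right_comm]
        apply mul_le_mul_of_nonneg_right _ (zero_le_logHeight₁ _)
        rw [Int.natAbs_mul, Int.natAbs_natCast]
        have h7 := (hp t).2
        rw [Int.abs_eq_natAbs] at h7
        have h8 : ((q * b t : ℤ) - n * p t).natAbs * L ^ 3 ≤ n := by exact_mod_cast h7
        generalize ((q * b t : ℤ) - n * p t).natAbs = d at *
        have h9 : d * m * L ≤ n := by
          calc d * m * L ≤ d * L * L := by gcongr
            _ = d * (L * L * 1) := by ring
            _ ≤ d * (L * L * L) := by gcongr; omega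
            _ = d * L ^ 3 := by ring
            _ ≤ n := h8
        exact_mod_cast h9
      calc _ ≤ (∑ t, logHeight₁ (((g t ^ (((q * b t : ℤ) - n * p t) * m) : Fˣ)) : F)) * L := by
            gcongr; exact logHeight₁_prod_le _ _
        _ = ∑ t, logHeight₁ (((g t ^ (((q * b t : ℤ) - n * p t) * m) : Fˣ)) : F) * L := by
            rw [Finset.sum_mul]
        _ ≤ ∑ t, n * logHeight₁ (g t : F) := Finset.sum_le_sum fun t _ ↦ h6 t
        _ = n * ∑ t, logHeight₁ (g t : F) := by rw [Finset.mul_sum]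
        _ ≤ n * h0 := by gcongr
        _ = _ := mul_comm _ _
    have h6 : (M - totalWeight F : ℝ) * L * Real.log 2 ≤ h0 * n := by
      calc (M - totalWeight F : ℝ) * L * Real.log 2
          = (M * Real.log 2 - totalWeight F * Real.log 2) * L := by ring
        _ ≤ logHeight₁ ((Λ : F) ^ (q * m)) * L := by gcongr; linarith
        _ ≤ _ := h5
    have h7 : (M - totalWeight F : ℝ) * L ≤ 2 * h0 * n := by
      rcases le_total ((M - totalWeight F : ℝ) * L) 0 with h | h
      · exact h.trans (by positivity)
      · nlinarith
    linarith

lemma exists_L (tw c : ℕ) (B : ℝ) : ∃ L : ℕ, 2 ≤ L ∧ 2 * c ≤ L ^ 2 ∧ B ≤ L ∧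
    tw * (1 + Real.log 3 + 4 * Real.log L) + L / 40 < 3 / 10 * ((L : ℝ) - 1) := by
  have h1 := (Real.isLittleO_log_id_atTop).comp_tendsto (tendsto_natCast_atTop_atTop (R := ℝ))
  have h2 := h1.def (c := 1 / (40 * (tw + 1))) (by positivity)
  obtain ⟨N, hN⟩ := Filter.eventually_atTop.1 h2
  obtain ⟨P, hP⟩ := exists_nat_gt (max B (40 * (tw * (1 + Real.log 3) + 1)))
  refine ⟨max (max N P) (2 * c + 2), by omega, ?_, ?_, ?_⟩
  · have : 2 * c ≤ max (max N P) (2 * c + 2) := by omega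
    nlinarith
  · have : P ≤ max (max N P) (2 * c + 2) := by omega
    have : (P : ℝ) ≤ (max (max N P) (2 * c + 2) : ℕ) := by exact_mod_cast this
    have := le_max_left B (40 * (tw * (1 + Real.log 3) + 1))
    linarith
  · have h3 : P ≤ max (max N P) (2 * c + 2) := by omega
    have h3 : (P : ℝ) ≤ (max (max N P) (2 * c + 2) : ℕ) := by exact_mod_cast h3
    have h4 := hN (max (max N P) (2 * c + 2)) (by omega)
    generalize max (max N P) (2 * c + 2) = L at *
    have h5 := le_max_right B (40 * (tw * (1 + Real.log 3) + 1))
    simp only [Function.comp, id, Real.norm_eq_abs, Nat.abs_cast] at h4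
    have h6 : tw * Real.log L ≤ L / 40 := by
      have h7 : Real.log L ≤ 1 / (40 * (tw + 1)) * L := (le_abs_self _).trans h4
      calc tw * Real.log L ≤ (tw + 1) * (1 / (40 * (tw + 1)) * L) := by
            rcases le_total 0 (Real.log L) with h | h
            · gcongr; linarith
            · exact (mul_nonpos_of_nonneg_of_nonpos (by positivity) h).trans (by positivity)
        _ = L / 40 := by field_simp
    linarith

lemma F0 {F : Type*} [Field F] [CharZero F] [AdmissibleAbsValues F]
    (v : AbsoluteValue F ℝ) (hvm : v ∈ nonarchAbsVal (K := F))
    {ι : Type*} [Fintype ι] (g : ι → Fˣ) (hg : ∀ t, v ((g t : F) - 1) ≤ 1 / 2) (ε : ℝ) (hε : 0 < ε) :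
    ∃ n0 : ℕ, 1 ≤ n0 ∧ ∀ n ≥ n0, ∀ (b : ι → ℕ), (∀ t, b t < n) → ∀ γ : Fˣ,
      v ((γ : F) - 1) ≤ 1 / 2 → ((∏ t, g t ^ b t) * γ ^ n : Fˣ) ≠ 1 →
      ∀ M : ℕ, v ((((∏ t, g t ^ b t) * γ ^ n : Fˣ) : F) - 1) ≤ (1 / 2) ^ M →
      M ≤ ε * n * (logHeight₁ (γ : F) + 1) := by
  obtain ⟨h0, hh0⟩ := exists_nat_ge (∑ t, logHeight₁ (g t : F))
  obtain ⟨c, hc⟩ : ∃ c, c = 40 * (4 + 6 * h0) := ⟨_, rfl⟩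
  obtain ⟨L, hL1, hL2, hLB, hLbig⟩ := exists_L (totalWeight F) c (2 * c ^ 2 / ε)
  refine ⟨L ^ 3 * (L ^ 3) ^ Fintype.card ι + totalWeight F * L, ?_, ?_⟩
  · have : 1 ≤ L ^ 3 * (L ^ 3) ^ Fintype.card ι := Nat.one_le_iff_ne_zero.2 (by positivity)
    omega
  intro n hn b hb γ hγ hΛ M hM
  have h1 : 1 ≤ L ^ 3 * (L ^ 3) ^ Fintype.card ι := Nat.one_le_iff_ne_zero.2 (by positivity)
  obtain ⟨q, hq1, hq2, p, hp⟩ := simult_approx n (L ^ 3) (by omega) (by positivity) b hb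
  have hcr : (160 : ℝ) + 240 * h0 = c := by rw [hc]; push_cast; ring
  have hfl := Nat.lt_floor_add_one (logHeight₁ (γ : F))
  have key : (M * L : ℝ) ≤ 2 * c ^ 2 * (⌊logHeight₁ (γ : F)⌋₊ + 1 : ℕ) * n := by
    by_cases hω : ∀ l l', l < L → l' < L →
        (γ ^ q * ∏ t, g t ^ p t) ^ l = (γ ^ q * ∏ t, g t ^ p t) ^ l' → l = l'
    · refine nondeg_case v hvm g hg h0 hh0 c L hc hL1 hL2 hLbig n q hq1 ?_ b p hp γ hγ
        (⌊logHeight₁ (γ : F)⌋₊ + 1) (by omega) (by push_cast; exact hfl.le) hω M hM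
      calc L ^ 3 * q ≤ L ^ 3 * (L ^ 3) ^ Fintype.card ι := by gcongr
        _ ≤ n := by omega
    · have : ∃ m, 0 < m ∧ m < L ∧ (γ ^ q * ∏ t, g t ^ p t) ^ m = 1 := by
        push Not at hω
        obtain ⟨l, l', hl, hl', h, hne⟩ := hω
        rcases lt_or_gt_of_ne hne with h3 | h3
        · refine ⟨l' - l, by omega, by omega, ?_⟩
          rw [pow_sub _ h3.le, ← h, mul_inv_cancel]
        · refine ⟨l - l', by omega, by omega, ?_⟩
          rw [pow_sub _ h3.le, ← h, mul_inv_cancel]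
      obtain ⟨m, hm, hmL, hα⟩ := this
      refine (deg_case v hvm g hg h0 hh0 L hL1 n q hq1 (by omega) b p hp γ hγ m hm hmL hα M hΛ
        hM).trans ?_
      have hH : (1 : ℝ) ≤ (⌊logHeight₁ (γ : F)⌋₊ + 1 : ℕ) := by push_cast; linarith [Nat.cast_nonneg (α := ℝ) ⌊logHeight₁ (γ : F)⌋₊]
      have h00 : (0 : ℝ) ≤ h0 := by positivity
      have h4 : (1 + 2 * h0 : ℝ) ≤ 2 * c ^ 2 := by nlinarith
      calc (1 + 2 * h0 : ℝ) * n ≤ 2 * c ^ 2 * n := by gcongr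
        _ = 2 * c ^ 2 * 1 * n := by ring
        _ ≤ _ := by gcongr
  have hz := zero_le_logHeight₁ (γ : F)
  have hfl2 := Nat.floor_le hz
  have hL0 : (0 : ℝ) < L := by positivity
  rw [div_le_iff₀ hε] at hLB
  refine le_of_mul_le_mul_right ?_ hL0
  calc (M * L : ℝ) ≤ _ := key
    _ ≤ 2 * c ^ 2 * (logHeight₁ (γ : F) + 1) * n := by gcongr; push_cast; linarith
    _ ≤ (L * ε) * (logHeight₁ (γ : F) + 1) * n := by gcongr
    _ = _ := by ring

lemma F1 {F : Type*} [Field F] [CharZero F] [AdmissibleAbsValues F]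
    (v : AbsoluteValue F ℝ) (hvm : v ∈ nonarchAbsVal (K := F))
    {ι : Type*} [Fintype ι] (g : ι → Fˣ) (hg : ∀ t, v ((g t : F) - 1) ≤ 1 / 2) (ε : ℝ) (hε : 0 < ε) :
    ∃ n0 : ℕ, 1 ≤ n0 ∧ ∀ n ≥ n0, ∀ (b : ι → ℤ), ∀ ζ : Fˣ,
      v ((ζ : F) - 1) ≤ 1 / 2 → ((∏ t, g t ^ b t) * ζ ^ n : Fˣ) ≠ 1 →
      ∀ M : ℕ, v ((((∏ t, g t ^ b t) * ζ ^ n : Fˣ) : F) - 1) ≤ (1 / 2) ^ M →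
      M ≤ ε * (logHeight₁ (((∏ t, g t ^ b t) * ζ ^ n : Fˣ) : F) + n) := by
  have hv : IsNonarchimedean v := isNonarchimedean v hvm
  obtain ⟨h0, hh0⟩ := exists_nat_ge (∑ t, logHeight₁ (g t : F))
  obtain ⟨n0, hn0, h⟩ := F0 v hvm g hg (ε / (h0 + 1)) (by positivity)
  refine ⟨n0, hn0, fun n hn b ζ hζ hΛ M hM ↦ ?_⟩
  have hnz : (n : ℤ) ≠ 0 := by omega
  have hb' : ∀ t, ∃ r : ℕ, r < n ∧ b t = n * (b t / n) + r := by
    intro t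
    refine ⟨(b t % n).toNat, ?_, ?_⟩
    · have := Int.emod_lt_of_pos (b t) (show (0 : ℤ) < n by omega)
      have := Int.emod_nonneg (b t) hnz
      omega
    · have := Int.emod_nonneg (b t) hnz
      rw [Int.toNat_of_nonneg this, Int.mul_ediv_add_emod]
  choose r hr1 hr2 using hb'
  set γ : Fˣ := (∏ t, g t ^ (b t / n)) * ζ with hγd
  have hγ : v ((γ : F) - 1) ≤ 1 / 2 := by
    rw [← mem_ouSub v hv]
    exact mul_mem (prod_mem fun t _ ↦ zpow_mem (hg t) _) hζ
  have e1 : (∏ t, g t ^ b t) * ζ ^ n = (∏ t, g t ^ r t) * γ ^ n := by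
    rw [hγd, mul_pow, ← Finset.prod_pow, ← mul_assoc, ← Finset.prod_mul_distrib]
    congr 1
    refine Finset.prod_congr rfl fun t _ ↦ ?_
    conv_lhs => rw [hr2 t, zpow_add, zpow_natCast, mul_comm (n : ℤ), zpow_mul, zpow_natCast]
    exact mul_comm _ _
  rw [e1] at hΛ hM ⊢
  refine (h n hn r hr1 γ hγ hΛ M hM).trans ?_
  have h3 : n * logHeight₁ (γ : F) ≤ logHeight₁ (((∏ t, g t ^ r t) * γ ^ n : Fˣ) : F) + n * h0 := by
    rw [← logHeight₁_pow]
    have e2 : (γ : F) ^ n = (((∏ t, g t ^ r t) * γ ^ n : Fˣ) : F) * (∏ t, (g t : F) ^ r t)⁻¹ := by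
      rw [← Units.val_pow_eq_pow_val]
      simp only [Units.val_mul, Units.coe_prod, Units.val_pow_eq_pow_val]
      have : ∏ t, (g t : F) ^ r t ≠ 0 := Finset.prod_ne_zero_iff.2 fun t _ ↦ by simp
      field_simp
    rw [e2]
    refine (logHeight₁_mul_le _ _).trans (add_le_add le_rfl ?_)
    rw [logHeight₁_inv]
    calc _ ≤ ∑ t, logHeight₁ ((g t : F) ^ r t) := logHeight₁_prod_le _ _
      _ ≤ ∑ t, n * logHeight₁ (g t : F) := by
        refine Finset.sum_le_sum fun t _ ↦ ?_
        rw [logHeight₁_pow]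
        exact mul_le_mul_of_nonneg_right (by exact_mod_cast (hr1 t).le) (zero_le_logHeight₁ _)
      _ = n * ∑ t, logHeight₁ (g t : F) := by rw [Finset.mul_sum]
      _ ≤ _ := by gcongr
  have hz := zero_le_logHeight₁ (((∏ t, g t ^ r t) * γ ^ n : Fˣ) : F)
  generalize logHeight₁ (((∏ t, g t ^ r t) * γ ^ n : Fˣ) : F) = X at *
  calc ε / (h0 + 1) * n * (logHeight₁ (γ : F) + 1) = ε / (h0 + 1) * (n * logHeight₁ (γ : F) + n) := by ring
    _ ≤ ε / (h0 + 1) * ((h0 + 1) * (X + n)) := by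
      gcongr
      have : (0:ℝ) ≤ h0 * X := by positivity
      linarith
    _ = _ := by field_simp

end PartH


section PartI
open Height AdmissibleAbsValues NumberField IsDedekindDomain

lemma SS {F : Type*} [Field F] [CharZero F] [AdmissibleAbsValues F]
    (v : AbsoluteValue F ℝ) (hvm : v ∈ nonarchAbsVal (K := F))
    (hdisc : ∀ x, v x < 1 → v x ≤ 1 / 2) (q0 : ℕ) (hq0 : 1 ≤ q0)
    (hres : ∀ u, v u = 1 → v (u ^ q0 - 1) < 1)
    (Γ : Subgroup Fˣ) (hfg : Γ.FG) (hΓ : ∀ u ∈ Γ, v (u : F) = 1) (ε : ℝ) (hε : 0 < ε) :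
    ∃ n0 : ℕ, 1 ≤ n0 ∧ ∀ n ≥ n0, ∀ u ∈ Γ, ∀ ζ : Fˣ, v (ζ : F) = 1 → u * ζ ^ n ≠ 1 →
      ∀ M : ℕ, v (((u * ζ ^ n : Fˣ) : F) - 1) ≤ (1 / 2) ^ M →
      M ≤ ε * (logHeight₁ ((u * ζ ^ n : Fˣ) : F) + n) := by
  have hv : IsNonarchimedean v := isNonarchimedean v hvm
  obtain ⟨s, hs⟩ := hfg
  have hsΓ : ∀ t : s, (t : Fˣ) ∈ Γ := fun t ↦ hs ▸ Subgroup.subset_closure t.2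
  have hpw : ∀ u : Fˣ, v (u : F) = 1 → v (((u ^ q0 : Fˣ) : F) - 1) ≤ 1 / 2 := by
    intro u hu
    rw [Units.val_pow_eq_pow_val]
    exact hdisc _ (hres _ hu)
  obtain ⟨n0, hn0, h⟩ := F1 v hvm (fun t : s ↦ (t : Fˣ) ^ q0) (fun t ↦ hpw _ (hΓ _ (hsΓ t)))
    (ε / q0) (by positivity)
  obtain ⟨n1, hn1⟩ := exists_nat_ge (totalWeight F / ε)
  refine ⟨max n0 n1, by omega, fun n hn u hu ζ hζ hΛ M hM ↦ ?_⟩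
  have hn1' : (n1 : ℝ) ≤ n := by exact_mod_cast (le_max_right _ _).trans hn
  have hz := zero_le_logHeight₁ ((u * ζ ^ n : Fˣ) : F)
  by_cases h1 : (u * ζ ^ n) ^ q0 = 1
  · have h2 : logHeight₁ (((u * ζ ^ n : Fˣ) : F) ^ q0) = 0 := by
      rw [← Units.val_pow_eq_pow_val, h1]; simp
    rw [logHeight₁_pow] at h2
    have h3 : logHeight₁ ((u * ζ ^ n : Fˣ) : F) = 0 := by
      rcases mul_eq_zero.1 h2 with h | h
      · have : q0 = 0 := by exact_mod_cast h
        omega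
      · exact h
    have h4 := liou_one v hvm ((u * ζ ^ n : Fˣ) : F)
      (fun h ↦ hΛ (Units.ext (by rw [h, Units.val_one]))) M hM
    rw [h3, add_zero] at h4
    have h5 := le_of_mul_le_mul_right h4 (Real.log_pos (by norm_num))
    rw [div_le_iff₀ hε] at hn1
    rw [h3, zero_add]
    nlinarith
  · obtain ⟨b, hb⟩ : ∃ b : s → ℤ, u = ∏ t : s, (t : Fˣ) ^ b t := by
      apply Subgroup.exists_of_mem_closure_range (fun t : s ↦ (t : Fˣ)) u
      simpa [hs] using hu
    have e1 : (u * ζ ^ n) ^ q0 = (∏ t : s, ((t : Fˣ) ^ q0) ^ b t) * (ζ ^ q0) ^ n := by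
      rw [mul_pow, ← pow_mul, mul_comm n, pow_mul]
      congr 1
      rw [hb, ← Finset.prod_pow]
      refine Finset.prod_congr rfl fun t _ ↦ ?_
      rw [← zpow_natCast, ← zpow_natCast, ← zpow_mul, ← zpow_mul, mul_comm]
    have hvΛ : v ((u * ζ ^ n : Fˣ) : F) = 1 := by
      rw [Units.val_mul, Units.val_pow_eq_pow_val, map_mul, map_pow, hζ, hΓ u hu]; simp
    have h2 : v ((((u * ζ ^ n) ^ q0 : Fˣ) : F) - 1) ≤ (1 / 2) ^ M := by
      rw [Units.val_pow_eq_pow_val]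
      exact (na_pow_sub_one v hv _ hvΛ.le _).trans hM
    have h3 := h n (by omega) b (ζ ^ q0) (hpw ζ hζ) (by rw [← e1]; exact h1) M (by rw [← e1]; exact h2)
    rw [← e1, Units.val_pow_eq_pow_val, logHeight₁_pow] at h3
    refine h3.trans ?_
    have hq : (1 : ℝ) ≤ q0 := by exact_mod_cast hq0
    calc ε / q0 * (q0 * logHeight₁ ((u * ζ ^ n : Fˣ) : F) + n)
        ≤ ε / q0 * (q0 * logHeight₁ ((u * ζ ^ n : Fˣ) : F) + q0 * n) := by
          gcongr; exact le_mul_of_one_le_left (by positivity) hq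
      _ = _ := by field_simp

variable {K : Type*} [Field K] [NumberField K]

/-- the absolute value attached to a prime -/
noncomputable def vP (P : HeightOneSpectrum (𝓞 K)) : AbsoluteValue K ℝ := (FinitePlace.mk P).val

lemma vP_mem (P : HeightOneSpectrum (𝓞 K)) : vP P ∈ nonarchAbsVal (K := K) :=
  (FinitePlace.mk P).isFinitePlace

lemma vP_eq (P : HeightOneSpectrum (𝓞 K)) (x : K) :
    vP P x = WithZeroMulInt.toNNReal (HeightOneSpectrum.absNorm_ne_zero P) (P.valuation K x) :=
  FinitePlace.norm_embedding' P x

lemma vP_lt_one_iff (P : HeightOneSpectrum (𝓞 K)) (x : K) : vP P x < 1 ↔ P.valuation K x < 1 := by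
  rw [vP_eq, NNReal.coe_lt_one]
  exact WithZeroMulInt.toNNReal_lt_one_iff (HeightOneSpectrum.one_lt_absNorm_nnreal P)

lemma vP_eq_one_iff (P : HeightOneSpectrum (𝓞 K)) (x : K) : vP P x = 1 ↔ P.valuation K x = 1 := by
  rw [vP_eq, NNReal.coe_eq_one]
  exact WithZeroMulInt.toNNReal_eq_one_iff _ (HeightOneSpectrum.absNorm_ne_zero P) (HeightOneSpectrum.one_lt_absNorm_nnreal P).ne'

lemma vP_int_lt (P : HeightOneSpectrum (𝓞 K)) (x : 𝓞 K) : vP P (algebraMap _ K x) < 1 ↔ x ∈ P.asIdeal := by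
  rw [vP_lt_one_iff, P.valuation_lt_one_iff_mem]

lemma vP_int_le (P : HeightOneSpectrum (𝓞 K)) (x : 𝓞 K) : vP P (algebraMap _ K x) ≤ 1 :=
  NumberField.FinitePlace.norm_le_one K P x

lemma vP_disc (P : HeightOneSpectrum (𝓞 K)) (x : K) (h : vP P x < 1) : vP P x ≤ 1 / 2 := by
  have h1 := (vP_lt_one_iff P x).1 h
  by_cases hx : x = 0
  · simp [hx]
  have h2 : P.valuation K x ≤ WithZero.exp (-1) := by
    rw [← WithZero.lt_mul_exp_iff_le WithZero.exp_ne_zero, ← WithZero.exp_add]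
    simpa using h1
  rw [vP_eq]
  have h3 : WithZeroMulInt.toNNReal (HeightOneSpectrum.absNorm_ne_zero P) (P.valuation K x) ≤
     WithZeroMulInt.toNNReal (HeightOneSpectrum.absNorm_ne_zero P) (WithZero.exp (-1)) :=
    (WithZeroMulInt.toNNReal_strictMono (HeightOneSpectrum.one_lt_absNorm_nnreal P)).monotone h2
  have h4 := HeightOneSpectrum.one_lt_absNorm P
  have h5 : WithZeroMulInt.toNNReal (HeightOneSpectrum.absNorm_ne_zero P) (WithZero.exp (-1)) =
      ((Ideal.absNorm P.asIdeal : NNReal))⁻¹ := by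
    rw [WithZeroMulInt.toNNReal_neg_apply _ WithZero.exp_ne_zero]
    exact zpow_neg_one _
  rw [h5] at h3
  refine (NNReal.coe_le_coe.2 h3).trans ?_
  push_cast
  rw [one_div]
  exact inv_anti₀ (by norm_num) (by exact_mod_cast h4)

lemma vP_res (P : HeightOneSpectrum (𝓞 K)) : ∃ q0, 1 ≤ q0 ∧ ∀ u, vP P u = 1 → vP P (u ^ q0 - 1) < 1 := by
  have := P.isMaximal
  let _ := Ideal.Quotient.field P.asIdeal
  have : Finite (𝓞 K ⧸ P.asIdeal) := Ideal.finiteQuotientOfFreeOfNeBot _ P.ne_bot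
  have := Fintype.ofFinite (𝓞 K ⧸ P.asIdeal)
  refine ⟨Fintype.card (𝓞 K ⧸ P.asIdeal) - 1, ?_, ?_⟩
  · have := Fintype.one_lt_card (α := 𝓞 K ⧸ P.asIdeal)
    omega
  intro u hu
  have hv : IsNonarchimedean (vP P) := isNonarchimedean _ (vP_mem P)
  obtain ⟨a, ha⟩ := P.exists_valuation_sub_lt_of_integer (x := u) ((vP_eq_one_iff P u).1 hu).le 1
  rw [Units.val_one, ← vP_lt_one_iff] at ha
  have ha1 : a ∉ P.asIdeal := by
    intro h
    rw [← vP_int_lt] at h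
    have := hv (algebraMap _ K a) (-(algebraMap _ K a - u))
    rw [show algebraMap _ K a + -(algebraMap _ K a - u) = u by ring, hu, AbsoluteValue.map_neg] at this
    have := this.trans_lt (max_lt h ha)
    linarith
  generalize hq : Fintype.card (𝓞 K ⧸ P.asIdeal) - 1 = q
  have h2 : a ^ q - 1 ∈ P.asIdeal := by
    rw [← Ideal.Quotient.eq_zero_iff_mem, map_sub, map_pow, map_one, ← hq, FiniteField.pow_card_sub_one_eq_one, sub_self]
    rwa [Ne, Ideal.Quotient.eq_zero_iff_mem]
  rw [← vP_int_lt, map_sub, map_pow, map_one] at h2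
  have h3 : vP P (u ^ q - algebraMap _ K a ^ q) < 1 := by
    obtain ⟨c, hc⟩ : ∃ c, c = u / algebraMap _ K a := ⟨_, rfl⟩
    rw [← (Commute.all u (algebraMap _ K a)).mul_geom_sum₂, map_mul]
    rw [← AbsoluteValue.map_neg, neg_sub] at ha
    refine mul_lt_one_of_nonneg_of_lt_one_left ((vP P).nonneg _) ha ?_
    refine na_sum_le _ hv _ _ 1 zero_le_one fun i _ ↦ ?_
    rw [map_mul, map_pow, map_pow, hu, one_pow, one_mul]
    exact pow_le_one₀ ((vP P).nonneg _) (vP_int_le P a)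
  have := hv (u ^ q - algebraMap _ K a ^ q) (algebraMap _ K a ^ q - 1)
  rw [sub_add_sub_cancel] at this
  exact this.trans_lt (max_lt h3 h2)

lemma sunit_fg (T : Set (HeightOneSpectrum (𝓞 K))) (hT : T.Finite) : (T.unit K).FG := by
  have := hT.fintype
  rw [Subgroup.fg_iff_add_fg]
  let f : Additive Kˣ →+ (T → ℤ) := AddMonoidHom.pi fun P ↦ MonoidHom.toAdditive (HeightOneSpectrum.valuationOfNeZero (K := K) P.1)
  let N := AddSubgroup.toIntSubmodule (T.unit K).toAddSubgroup
  suffices h : N.FG by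
    rw [Submodule.fg_iff_addSubgroup_fg] at h
    exact h
  refine Submodule.fg_of_fg_map_of_fg_inf_ker f.toIntLinearMap (IsNoetherian.noetherian _) ?_
  let φ : Additive (𝓞 K)ˣ →ₗ[ℤ] Additive Kˣ := (MonoidHom.toAdditive (Units.map (algebraMap (𝓞 K) K : 𝓞 K →* K))).toIntLinearMap
  have h1 : N ⊓ LinearMap.ker f.toIntLinearMap = Submodule.map φ ⊤ := by
    ext x
    constructor
    · rintro ⟨hx1, hx2⟩
      have hx1 : ∀ P ∉ T, P.valuation K (x.toMul : K) = 1 := hx1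
      have hval : ∀ P : HeightOneSpectrum (𝓞 K), P.valuation K (x.toMul : K) = 1 := by
        intro P
        by_cases hP : P ∈ T
        · have h2 : f x ⟨P, hP⟩ = 0 := congrFun (LinearMap.mem_ker.1 hx2) ⟨P, hP⟩
          have h3 : P.valuationOfNeZero x.toMul = 1 := h2
          rw [← HeightOneSpectrum.valuationOfNeZero_eq, h3, WithZero.coe_one]
        · exact hx1 P hP
      obtain ⟨a, ha⟩ := HeightOneSpectrum.mem_integers_of_valuation_le_one (R := 𝓞 K) K (x.toMul : K)
        fun P ↦ (hval P).le
      obtain ⟨b, hb⟩ := HeightOneSpectrum.mem_integers_of_valuation_le_one (R := 𝓞 K) K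
        ((x.toMul)⁻¹ : K) fun P ↦ by rw [map_inv₀, hval P, inv_one]
      have hab : a * b = 1 := by
        apply FaithfulSMul.algebraMap_injective (𝓞 K) K
        rw [map_mul, ha, hb, map_one, mul_inv_cancel₀ (Units.ne_zero _)]
      refine ⟨Additive.ofMul ⟨a, b, hab, by rw [mul_comm, hab]⟩, trivial, ?_⟩
      apply Additive.toMul.injective
      apply Units.ext
      exact ha
    · rintro ⟨y, -, rfl⟩
      have hy : ∀ P : HeightOneSpectrum (𝓞 K), P.valuationOfNeZero (φ y).toMul = 1 := fun P ↦
        HeightOneSpectrum.valuation_of_unit_eq (K := K) P y.toMul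
      constructor
      · intro P _
        have := HeightOneSpectrum.valuationOfNeZero_eq P (φ y).toMul
        rw [hy P, WithZero.coe_one] at this
        exact this.symm
      · refine LinearMap.mem_ker.2 ?_
        funext P
        exact hy P.1
  rw [h1]
  exact Submodule.FG.map _ (Module.Finite.fg_top)

lemma SSK (P : HeightOneSpectrum (𝓞 K)) (T : Set (HeightOneSpectrum (𝓞 K))) (hT : T.Finite)
    (ε : ℝ) (hε : 0 < ε) :
    ∃ n0 : ℕ, 1 ≤ n0 ∧ ∀ n ≥ n0, ∀ u ∈ T.unit K, ∀ ζ : Kˣ, vP P (u : K) = 1 → vP P (ζ : K) = 1 →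
      u * ζ ^ n ≠ 1 →
      ∀ M : ℕ, vP P (((u * ζ ^ n : Kˣ) : K) - 1) ≤ (1 / 2) ^ M →
      M ≤ ε * (logHeight₁ ((u * ζ ^ n : Kˣ) : K) + n) := by
  obtain ⟨q0, hq0, hres⟩ := vP_res P
  obtain ⟨n0, hn0, h⟩ := SS (vP P) (vP_mem P) (vP_disc P) q0 hq0 hres ((T \ {P}).unit K)
    (sunit_fg _ hT.sdiff) (fun u hu ↦ by
      rw [vP_eq_one_iff]
      exact hu P (by simp)) ε hε
  refine ⟨n0, hn0, fun n hn u hu ζ hu1 hζ hΛ M hM ↦ h n hn u ?_ ζ hζ hΛ M hM⟩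
  intro Q hQ
  by_cases hQP : Q = P
  · rw [hQP, ← vP_eq_one_iff]; exact hu1
  · exact hu Q (by simpa [hQP] using hQ)

end PartI


section PartJ
open Height AdmissibleAbsValues NumberField IsDedekindDomain

lemma logHeight_int {K : Type*} [Field K] [AdmissibleAbsValues K] (m : ℤ) (hm : m ≠ 0) :
    logHeight₁ (m : K) ≤ totalWeight K * Real.log |(m : ℝ)| := by
  have h1 : (1 : ℝ) ≤ |(m : ℝ)| := by exact_mod_cast Int.one_le_abs hm
  have hab : ∀ v : AbsoluteValue K ℝ, v (m : K) = v (m.natAbs : K) := by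
    intro v
    obtain ⟨k, rfl | rfl⟩ := m.eq_nat_or_neg <;> simp
  have := height_bound (K := K) (∅ : Finset ℕ) (fun _ ↦ 1) (fun _ ↦ 1) (m : K) |(m : ℝ)| h1
    (by
      intro v _
      rw [hab, Finset.prod_empty, mul_one, ← Int.cast_abs, Int.abs_eq_natAbs]
      rw [Int.cast_natCast]
      exact v.apply_nat_le_self _)
    (by
      intro v hv
      rw [hab, Finset.prod_empty]
      exact na_nat_le v (isNonarchimedean v hv) _)
  rw [Finset.prod_empty, mul_one] at this
  rw [logHeight₁_eq_log_mulHeight₁, ← Real.log_pow]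
  exact Real.log_le_log (mulHeight₁_pos _) this

variable {K : Type*} [Field K] [NumberField K]

lemma int_prime_mem (P : HeightOneSpectrum (𝓞 K)) (S : Finset ℕ) (x : ℤ) (hx : IsSUnit S x)
    (h : (x : 𝓞 K) ∈ P.asIdeal) : ∃ p ∈ S, ((p : ℕ) : 𝓞 K) ∈ P.asIdeal := by
  have h1 : (x.natAbs : 𝓞 K) ∈ P.asIdeal := by
    obtain ⟨k, hk⟩ := x.eq_nat_or_neg
    rcases hk with rfl | rfl
    · simpa using h
    · simpa using h
  have hx0 : x.natAbs ≠ 0 := by simpa using hx.1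
  rw [← Nat.prod_primeFactorsList hx0] at h1
  have : ∀ l : List ℕ, ((l.prod : ℕ) : 𝓞 K) ∈ P.asIdeal → ∃ p ∈ l, ((p : ℕ) : 𝓞 K) ∈ P.asIdeal := by
    intro l
    induction l with
    | nil =>
      intro h
      simp only [List.prod_nil, Nat.cast_one] at h
      exact absurd ((Ideal.eq_top_iff_one _).2 h) P.isPrime.ne_top
    | cons p l ih =>
      intro h
      rw [List.prod_cons, Nat.cast_mul] at h
      rcases P.isPrime.mem_or_mem h with h | h
      · exact ⟨p, by simp, h⟩
      · obtain ⟨q, hq, h⟩ := ih h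
        exact ⟨q, by simp [hq], h⟩
  obtain ⟨p, hp, h2⟩ := this _ h1
  refine ⟨p, hx.2 p (Nat.prime_of_mem_primeFactorsList hp) ?_, h2⟩
  exact Int.natCast_dvd.2 (Nat.dvd_of_mem_primeFactorsList hp)

/-- primes above elements of `S` -/
def TS (K : Type*) [Field K] [NumberField K] (S : Finset ℕ) : Set (HeightOneSpectrum (𝓞 K)) :=
  {P | ∃ p ∈ S, ((p : ℕ) : 𝓞 K) ∈ P.asIdeal}

lemma TS_finite (S : Finset ℕ) (hS : ∀ p ∈ S, p.Prime) : (TS K S).Finite := by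
  have : TS K S = ⋃ p ∈ S, {P : HeightOneSpectrum (𝓞 K) | ((p : ℕ) : 𝓞 K) ∈ P.asIdeal} := by
    ext P; simp [TS]
  rw [this]
  refine Set.Finite.biUnion S.finite_toSet fun p hp ↦ ?_
  have h := Ideal.finite_factors (R := 𝓞 K) (I := Ideal.span {((p : ℕ) : 𝓞 K)}) (by
    rw [Ne, Ideal.zero_eq_bot, Ideal.span_singleton_eq_bot]
    exact_mod_cast (hS p hp).ne_zero)
  refine h.subset fun P hP ↦ ?_
  change P.asIdeal ∣ _
  rw [Ideal.dvd_span_singleton]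
  exact hP

lemma vP_int_one (P : HeightOneSpectrum (𝓞 K)) (x : 𝓞 K) (h : x ∉ P.asIdeal) :
    vP P (algebraMap _ K x) = 1 :=
  le_antisymm (vP_int_le P x) (not_lt.1 fun h' ↦ h ((vP_int_lt P x).1 h'))

lemma mem_unit_of_dvd (S : Finset ℕ) (x : ℤ) (hx : IsSUnit S x) (α : 𝓞 K) (hα : α ∣ (x : 𝓞 K))
    (u : Kˣ) (hu : (u : K) = algebraMap _ K α) : u ∈ (TS K S).unit K := by
  intro P hP
  rw [hu, ← vP_eq_one_iff]
  refine vP_int_one P α fun h ↦ hP ?_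
  exact int_prime_mem P S x hx (P.asIdeal.mem_of_dvd hα h)

lemma exists_over (p : ℕ) (hp : p.Prime) : ∃ P : HeightOneSpectrum (𝓞 K), ((p : ℕ) : 𝓞 K) ∈ P.asIdeal := by
  have hp' : Prime (p : ℤ) := Nat.prime_iff_prime_int.1 hp
  have h0 : (p : ℤ) ≠ 0 := hp'.ne_zero
  have hpr : (Ideal.span {(p : ℤ)}).IsPrime := (Ideal.span_singleton_prime h0).2 hp'
  have : (Ideal.span {(p : ℤ)}).IsMaximal := hpr.isMaximal (by simpa using h0)
  obtain ⟨Q, hQ, hQ2⟩ := Ideal.exists_maximal_ideal_liesOver_of_isIntegral (S := 𝓞 K) (Ideal.span {(p : ℤ)})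
  have h3 : ((p : ℕ) : 𝓞 K) ∈ Q := by
    have : (p : ℤ) ∈ Q.under ℤ := by
      rw [← hQ2.over]; exact Ideal.mem_span_singleton_self _
    simpa [Ideal.mem_comap] using this
  refine ⟨⟨Q, hQ.isPrime, fun h ↦ ?_⟩, h3⟩
  rw [h, Ideal.mem_bot] at h3
  exact hp.ne_zero (by exact_mod_cast h3)

lemma vP_prime (P : HeightOneSpectrum (𝓞 K)) (p : ℕ) (h : ((p : ℕ) : 𝓞 K) ∈ P.asIdeal) :
    vP P (p : K) ≤ 1 / 2 := by
  apply vP_disc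
  have := (vP_int_lt P (p : 𝓞 K)).2 h
  simpa using this

lemma vP_intcast_le (P : HeightOneSpectrum (𝓞 K)) (m : ℤ) : vP P (m : K) ≤ 1 := by
  have := vP_int_le P (m : 𝓞 K)
  simpa using this

lemma vP_coprime (P : HeightOneSpectrum (𝓞 K)) (p : ℕ) (hp : p.Prime) (h : ((p : ℕ) : 𝓞 K) ∈ P.asIdeal)
    (m : ℤ) (hm : ¬ (p : ℤ) ∣ m) : vP P (m : K) = 1 := by
  have h1 : (m : 𝓞 K) ∉ P.asIdeal := by
    intro hmP
    have hc : IsCoprime (p : ℤ) m := (Nat.prime_iff_prime_int.1 hp).coprime_iff_not_dvd.2 hm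
    obtain ⟨a, b, hab⟩ := hc
    apply P.isPrime.ne_top
    rw [Ideal.eq_top_iff_one]
    have e : (1 : 𝓞 K) = (a : 𝓞 K) * ((p : ℕ) : 𝓞 K) + (b : 𝓞 K) * (m : 𝓞 K) := by
      exact_mod_cast hab.symm
    rw [e]
    exact P.asIdeal.add_mem (P.asIdeal.mul_mem_left _ h) (P.asIdeal.mul_mem_left _ hmP)
  have := vP_int_one P _ h1
  simpa using this

/-- valuation of an integer in terms of its `p`-part -/
lemma vP_intcast (P : HeightOneSpectrum (𝓞 K)) (p : ℕ) (hp : p.Prime) (h : ((p : ℕ) : 𝓞 K) ∈ P.asIdeal)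
    (m : ℤ) (hm : m ≠ 0) : vP P (m : K) = vP P (p : K) ^ padicValInt p m := by
  have := Fact.mk hp
  obtain ⟨m', hm'⟩ := padicValInt_dvd (p := p) m
  have h1 : ¬ (p : ℤ) ∣ m' := by
    intro hd
    have : (p : ℤ) ^ (padicValInt p m + 1) ∣ m := by
      conv_rhs => rw [hm']
      rw [pow_succ]; exact mul_dvd_mul_left _ hd
    rw [padicValInt_dvd_iff] at this
    omega
  conv_lhs => rw [hm']
  push_cast
  rw [map_mul, map_pow, vP_coprime P p hp h m' h1, mul_one]

lemma log_sunit (S : Finset ℕ) (hS : ∀ p ∈ S, p.Prime) (y : ℤ) (hy : IsSUnit S y) :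
    Real.log |(y : ℝ)| = ∑ p ∈ S, padicValInt p y * Real.log p := by
  have hy0 : y.natAbs ≠ 0 := by simpa using hy.1
  have h1 : y.natAbs = ∏ p ∈ S, p ^ padicValInt p y := by
    conv_lhs => rw [← Nat.prod_factorization_pow_eq_self hy0]
    rw [Finsupp.prod_of_support_subset (s := S)]
    · refine Finset.prod_congr rfl fun p hp ↦ ?_
      rw [Nat.factorization_def _ (hS p hp)]; rfl
    · intro p hp
      rw [Nat.support_factorization, Nat.mem_primeFactors] at hp
      exact hy.2 p hp.1 (Int.natCast_dvd.2 hp.2.1)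
    · simp
  rw [← Int.cast_abs, Int.abs_eq_natAbs, Int.cast_natCast, h1]
  push_cast
  rw [Real.log_prod (fun p hp ↦ pow_ne_zero _ (by exact_mod_cast (hS p hp).ne_zero))]
  exact Finset.sum_congr rfl fun p _ ↦ Real.log_pow _ _

/-- the small parameter -/
noncomputable def etaS (S : Finset ℕ) : ℝ := 1 / (2 * (∑ p ∈ S, Real.log p + 1))

lemma sumlog_nonneg (S : Finset ℕ) : 0 ≤ ∑ p ∈ S, Real.log p :=
  Finset.sum_nonneg fun _ _ ↦ Real.log_natCast_nonneg _

lemma etaS_pos (S : Finset ℕ) : 0 < etaS S := by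
  have := sumlog_nonneg S
  unfold etaS; positivity

lemma combine (S : Finset ℕ) (hS : ∀ p ∈ S, p.Prime) (Q : ℤ → Prop) (hQ : ∀ y, Q y → IsSUnit S y)
    (h : ∀ p ∈ S, ∃ A : ℝ, ∀ y, Q y → (padicValInt p y : ℝ) ≤ etaS S * Real.log |(y : ℝ)| + A) :
    {y | Q y}.Finite := by
  choose! A hA using h
  have hs := sumlog_nonneg S
  obtain ⟨Y, hY⟩ := exists_nat_ge (Real.exp (2 * ∑ p ∈ S, A p * Real.log p))
  refine (Set.finite_Icc (-(Y : ℤ)) Y).subset fun y hy ↦ ?_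
  have hy : Q y := hy
  have hl := log_sunit S hS y (hQ y hy)
  have h1 : (1 : ℝ) ≤ |(y : ℝ)| := by exact_mod_cast Int.one_le_abs (hQ y hy).1
  have hl0 : 0 ≤ Real.log |(y : ℝ)| := Real.log_nonneg h1
  have h2 : Real.log |(y : ℝ)| ≤ 1 / 2 * Real.log |(y : ℝ)| + ∑ p ∈ S, A p * Real.log p := by
    calc Real.log |(y : ℝ)| = _ := hl
      _ ≤ ∑ p ∈ S, (etaS S * Real.log |(y : ℝ)| + A p) * Real.log p :=
        Finset.sum_le_sum fun p hp ↦ mul_le_mul_of_nonneg_right (hA p hp y hy) (Real.log_natCast_nonneg _)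
      _ = etaS S * (∑ p ∈ S, Real.log p) * Real.log |(y : ℝ)| + ∑ p ∈ S, A p * Real.log p := by
        simp only [add_mul, Finset.sum_add_distrib]
        rw [← Finset.mul_sum]; ring
      _ ≤ _ := by
        gcongr
        unfold etaS
        rw [one_div, inv_mul_le_iff₀ (by positivity)]
        linarith
  have h3 : |(y : ℝ)| ≤ Y := by
    rw [← Real.exp_log (show 0 < |(y : ℝ)| by linarith)]
    refine (Real.exp_le_exp.2 ?_).trans hY
    linarith
  have h4 : |y| ≤ Y := by exact_mod_cast h3
  exact Set.mem_Icc.2 (abs_le.1 h4)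

/-- gcd control -/
lemma gcd_small (a p : ℕ) (hp : p.Prime) (x y : ℤ) (hx : x ≠ 0) (hy : y ≠ 0)
    (h : Int.gcd x y ≤ a) : padicValInt p x ≤ a ∨ padicValInt p y ≤ a := by
  have := Fact.mk hp
  by_contra! hc
  have h1 : (p : ℤ) ^ a ∣ x := (pow_dvd_pow _ hc.1.le).trans (padicValInt_dvd x)
  have h2 : (p : ℤ) ^ a ∣ y := (pow_dvd_pow _ hc.2.le).trans (padicValInt_dvd y)
  have h3 : ((p ^ a : ℕ) : ℤ) ∣ Int.gcd x y := Int.dvd_coe_gcd (by exact_mod_cast h1) (by exact_mod_cast h2)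
  have h4 : p ^ a ≤ Int.gcd x y := Nat.le_of_dvd (Int.gcd_pos_of_ne_zero_left _ hx) (by exact_mod_cast h3)
  have h5 := Nat.lt_pow_self hp.one_lt (n := a)
  omega

lemma exists_D (P : HeightOneSpectrum (𝓞 K)) (p : ℕ) (hp : p.Prime) (a : ℕ) :
    ∃ D : ℕ, ∀ k ≤ a, (1 / 2 : ℝ) ^ D ≤ vP P (p : K) ^ k := by
  have h0 : 0 < vP P (p : K) := (vP P).pos (by exact_mod_cast hp.ne_zero)
  obtain ⟨D, hD⟩ := exists_pow_lt_of_lt_one (pow_pos h0 a) (show (1 / 2 : ℝ) < 1 by norm_num)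
  refine ⟨D, fun k hk ↦ hD.le.trans ?_⟩
  have := vP_intcast_le P (p : ℤ)
  exact pow_le_pow_of_le_one h0.le (by exact_mod_cast this) hk

end PartJ


section PartK
open Height AdmissibleAbsValues NumberField IsDedekindDomain

lemma exists_field (ν : ℕ) (hν : 2 ≤ ν) (B C : ℤ) :
    ∃ (K : Type) (_ : Field K) (_ : NumberField K) (ζ b c : 𝓞 K),
      ζ ^ ν = 1 ∧ ζ ≠ 1 ∧ b ^ ν = (B : 𝓞 K) ∧ c ^ ν = (C : 𝓞 K) := by
  have hν0 : ν ≠ 0 := by omega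
  have hz := Complex.isPrimitiveRoot_exp ν hν0
  set z : ℂ := Complex.exp (2 * Real.pi * Complex.I / ν) with hzdef
  obtain ⟨b, hb⟩ := IsAlgClosed.exists_pow_nat_eq (B : ℂ) (Nat.pos_of_ne_zero hν0)
  obtain ⟨c, hc⟩ := IsAlgClosed.exists_pow_nat_eq (C : ℂ) (Nat.pos_of_ne_zero hν0)
  have hintg : ∀ (t : ℂ) (m : ℤ), t ^ ν = m → IsIntegral ℤ t := by
    intro t m h
    apply IsIntegral.of_pow (Nat.pos_of_ne_zero hν0)
    rw [h]
    exact isIntegral_algebraMap (R := ℤ) (x := m)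
  have hzi := hintg z 1 (by simpa using hz.pow_eq_one)
  have hbi := hintg b B hb
  have hci := hintg c C hc
  let L : IntermediateField ℚ ℂ := IntermediateField.adjoin ℚ {z, b, c}
  have hfd : FiniteDimensional ℚ L := by
    have : Finite ({z, b, c} : Set ℂ) := by
      exact Set.Finite.to_subtype (by simp)
    apply IntermediateField.finiteDimensional_adjoin
    intro x hx
    simp only [Set.mem_insert_iff, Set.mem_singleton_iff] at hx
    rcases hx with rfl | rfl | rfl
    · exact hzi.tower_top
    · exact hbi.tower_top
    · exact hci.tower_top
  have hNF : NumberField L := { to_charZero := inferInstance, to_finiteDimensional := hfd }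
  have hsub : ({z, b, c} : Set ℂ) ⊆ L := IntermediateField.subset_adjoin ℚ _
  have mk : ∀ t : ℂ, t ∈ L → IsIntegral ℤ t → ∃ x : 𝓞 L, ((x : L) : ℂ) = t := by
    intro t ht hi
    refine ⟨⟨⟨t, ht⟩, ?_⟩, rfl⟩
    exact (isIntegral_algHom_iff (L.val.restrictScalars ℤ) (fun x y h ↦ Subtype.ext h)).1 hi
  obtain ⟨x, hx⟩ := mk z (hsub (by simp)) hzi
  obtain ⟨y, hy⟩ := mk b (hsub (by simp)) hbi
  obtain ⟨w, hw⟩ := mk c (hsub (by simp)) hci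
  have inj : ∀ s t : 𝓞 L, ((s : L) : ℂ) = ((t : L) : ℂ) → s = t := by
    intro s t h
    exact RingOfIntegers.ext (Subtype.ext h)
  refine ⟨L, inferInstance, hNF, x, y, w, ?_, ?_, ?_, ?_⟩
  · apply inj
    simp [hx, hz.pow_eq_one]
  · intro h
    rw [h] at hx
    apply hz.ne_one (by omega)
    simpa using hx.symm
  · apply inj
    simp [hy, hb]
  · apply inj
    simp [hw, hc]

end PartK


section PartL
open Height AdmissibleAbsValues NumberField IsDedekindDomain

lemma app2_local {K : Type} [Field K] [NumberField K] (S : Finset ℕ) (hS : ∀ p ∈ S, p.Prime) (a ν : ℕ)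
    (hν : 2 ≤ ν) (B C : ℤ) (hB : B ≠ 0) (hC : C ≠ 0) (ζ b c : 𝓞 K)
    (hζ : ζ ^ ν = 1) (hζ1 : ζ ≠ 1) (hb : b ^ ν = (B : 𝓞 K)) (hc : c ^ ν = (C : 𝓞 K))
    (p : ℕ) (hp : p ∈ S) :
    ∃ A : ℝ, ∀ y x s u : ℤ, IsSUnit S x → IsSUnit S y → |x| ≤ |y| → Int.gcd x y ≤ a →
      y = B * u ^ ν → x + y = C * s ^ ν → s ≠ 0 →
      (padicValInt p y : ℝ) ≤ etaS S * Real.log |(y : ℝ)| + A := by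
  have hpp := hS p hp
  have hν0 : ν ≠ 0 := by omega
  obtain ⟨P, hP⟩ := exists_over (K := K) p hpp
  obtain ⟨D, hD⟩ := exists_D P p hpp a
  have heta := etaS_pos S
  set tw : ℝ := (totalWeight K : ℝ) with htw
  have htw0 : 0 ≤ tw := Nat.cast_nonneg _
  have hνR : (0 : ℝ) < ν := by exact_mod_cast Nat.pos_of_ne_zero hν0
  set ε : ℝ := etaS S / (ν * (4 * tw + 1)) with hεd
  have hε : 0 < ε := by positivity
  obtain ⟨n0, hn0, hSS⟩ := SSK P (TS K S) (TS_finite S hS) ε hε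
  set H0 : ℝ := 4 * tw * Real.log 2 + 2 * logHeight₁ (c : K) + 2 * logHeight₁ (b : K) + logHeight₁ (ζ : K) with hH0
  have hlog2 : 0 ≤ Real.log 2 := Real.log_nonneg (by norm_num)
  have hH00 : 0 ≤ H0 := by
    have h1 := zero_le_logHeight₁ (c : K)
    have h2 := zero_le_logHeight₁ (b : K)
    have h3 := zero_le_logHeight₁ (ζ : K)
    positivity
  refine ⟨a + ν * ε * (H0 + n0) + ν * (D + 1), ?_⟩
  intro y x s u hx hy hxy hg hyB hs hs0
  have hu0 : u ≠ 0 := by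
    rintro rfl
    rw [zero_pow hν0, mul_zero] at hyB
    exact hy.1 hyB
  have hy1 : (1 : ℝ) ≤ |(y : ℝ)| := by exact_mod_cast Int.one_le_abs hy.1
  have hL0 : 0 ≤ Real.log |(y : ℝ)| := Real.log_nonneg hy1
  set L := Real.log |(y : ℝ)| with hL
  set e := padicValInt p y with he
  have triv : (e : ℝ) ≤ a + ν * (D + 1) → (e : ℝ) ≤ etaS S * L + (a + ν * ε * (H0 + n0) + ν * (D + 1)) := by
    intro h
    have h1 : 0 ≤ etaS S * L := by positivity
    have h2 : 0 ≤ ν * ε * (H0 + n0) := by positivity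
    linarith
  rcases gcd_small a p hpp x y hx.1 hy.1 hg with hxa | hya
  swap
  · apply triv
    have : (e : ℝ) ≤ a := by exact_mod_cast hya
    have : 0 ≤ (ν : ℝ) * (D + 1) := by positivity
    linarith
  set f := e / ν with hf
  have hef : e < ν * (f + 1) := by
    have := Nat.lt_div_mul_add (a := e) (b := ν) (by omega)
    rw [← hf] at this
    nlinarith
  by_cases hfD : f ≤ D
  · apply triv
    have h1 : (e : ℝ) ≤ ν * (f + 1) := by exact_mod_cast hef.le
    have h2 : (f : ℝ) ≤ D := by exact_mod_cast hfD
    have h3 : (ν : ℝ) * (f + 1) ≤ ν * (D + 1) := by gcongr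
    have : (0 : ℝ) ≤ a := Nat.cast_nonneg _
    linarith
  obtain ⟨M, hM⟩ : ∃ M, f = M + D := ⟨f - D, by omega⟩
  have hM1 : 1 ≤ M := by omega
  set α1 : 𝓞 K := c * s - b * u with hα1
  set α2 : 𝓞 K := c * s - ζ * (b * u) with hα2
  have hxe : ((x : ℤ) : 𝓞 K) = (c * s) ^ ν - (b * u) ^ ν := by
    rw [mul_pow, mul_pow, hb, hc]
    have : x = C * s ^ ν - B * u ^ ν := by linarith
    rw [this]
    push_cast
    ring
  have hxe2 : ((x : ℤ) : 𝓞 K) = (c * s) ^ ν - (ζ * (b * u)) ^ ν := by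
    rw [mul_pow ζ, hζ, one_mul, hxe]
  have hd1 : α1 ∣ (x : 𝓞 K) := by rw [hxe]; exact sub_dvd_pow_sub_pow _ _ _
  have hd2 : α2 ∣ (x : 𝓞 K) := by rw [hxe2]; exact sub_dvd_pow_sub_pow _ _ _
  have hx0 : (x : 𝓞 K) ≠ 0 := by exact_mod_cast hx.1
  have h10 : α1 ≠ 0 := ne_zero_of_dvd_ne_zero hx0 hd1
  have h20 : α2 ≠ 0 := ne_zero_of_dvd_ne_zero hx0 hd2
  have h10K : (α1 : K) ≠ 0 := by simpa using h10
  have h20K : (α2 : K) ≠ 0 := by simpa using h20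
  set U1 : Kˣ := Units.mk0 (α1 : K) h10K with hU1
  set U2 : Kˣ := Units.mk0 (α2 : K) h20K with hU2
  have hm1 : U1 ∈ (TS K S).unit K := mem_unit_of_dvd S x hx α1 hd1 U1 rfl
  have hm2 : U2 ∈ (TS K S).unit K := mem_unit_of_dvd S x hx α2 hd2 U2 rfl
  have hm : U1 / U2 ∈ (TS K S).unit K := div_mem hm1 hm2
  have hval : ((U1 / U2 : Kˣ) : K) = (α1 : K) / α2 := by
    simp [hU1, hU2]
  have hdiff : (α1 : K) / α2 - 1 = ((ζ - 1 : 𝓞 K) : K) * ((b * u : 𝓞 K) : K) / α2 := by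
    rw [div_sub_one h20K]
    congr 1
    simp only [hα1, hα2]
    push_cast
    ring
  have hbu : vP P ((b * u : 𝓞 K) : K) ≤ (1 / 2) ^ f := by
    have h1 : vP P ((b * u : 𝓞 K) : K) ^ ν = vP P (y : K) := by
      rw [← map_pow]
      congr 1
      have : ((b * u) ^ ν : 𝓞 K) = (y : 𝓞 K) := by
        rw [mul_pow, hb, hyB]
        push_cast
        ring
      have h3 := congrArg (algebraMap (𝓞 K) K) this
      simpa using h3
    rw [vP_intcast P p hpp hP y hy.1] at h1
    have h2 : vP P (p : K) ^ padicValInt p y ≤ (1 / 2 : ℝ) ^ (f * ν) := by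
      calc vP P (p : K) ^ padicValInt p y ≤ (1 / 2 : ℝ) ^ padicValInt p y :=
            pow_le_pow_left₀ (AbsoluteValue.nonneg _ _) (vP_prime P p hP) _
        _ ≤ _ := pow_le_pow_of_le_one (by norm_num) (by norm_num) (Nat.div_mul_le_self e ν)
    rw [← h1, pow_mul] at h2
    exact le_of_pow_le_pow_left₀ hν0 (by positivity) h2
  have hv2 : (1 / 2 : ℝ) ^ D ≤ vP P (α2 : K) := by
    obtain ⟨β, hβ⟩ := hd2
    have h1 := hD _ hxa
    rw [← vP_intcast P p hpp hP x hx.1] at h1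
    have h3 := congrArg (algebraMap (𝓞 K) K) hβ
    have h4 : (x : K) = (α2 : K) * (β : K) := by simpa using h3
    rw [h4, map_mul] at h1
    have h5 := vP_int_le P β
    have h6 := (vP P).nonneg (α2 : K)
    calc _ ≤ _ := h1
      _ ≤ vP P (α2 : K) * 1 := by gcongr
      _ = _ := mul_one _
  have hv2pos : 0 < vP P (α2 : K) := lt_of_lt_of_le (by positivity) hv2
  have hΛ : vP P ((α1 : K) / α2 - 1) ≤ (1 / 2) ^ M := by
    rw [hdiff, map_div₀, map_mul, div_le_iff₀ hv2pos]
    have h5 := vP_int_le P (ζ - 1)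
    calc vP P ((ζ - 1 : 𝓞 K) : K) * vP P ((b * u : 𝓞 K) : K) ≤ 1 * (1 / 2) ^ f :=
          mul_le_mul h5 hbu (AbsoluteValue.nonneg _ _) zero_le_one
      _ = (1 / 2) ^ M * (1 / 2) ^ D := by rw [one_mul, hM, pow_add]
      _ ≤ _ := by gcongr
  have hlt : vP P ((α1 : K) / α2 - 1) < 1 :=
    lt_of_le_of_lt hΛ (pow_lt_one₀ (by norm_num) (by norm_num) (by omega))
  have hone : vP P ((α1 : K) / α2) = 1 :=
    na_one_of_sub_lt (vP P) (isNonarchimedean _ (vP_mem P)) _ hlt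
  have hne : (α1 : K) / α2 - 1 ≠ 0 := by
    rw [hdiff]
    apply div_ne_zero _ h20K
    apply mul_ne_zero
    · have : (ζ - 1 : 𝓞 K) ≠ 0 := sub_ne_zero.2 hζ1
      exact RingOfIntegers.coe_ne_zero_iff.2 this
    · have hb0 : b ≠ 0 := by
        rintro rfl
        rw [zero_pow hν0] at hb
        exact hB (by exact_mod_cast hb.symm)
      have : (b * u : 𝓞 K) ≠ 0 := mul_ne_zero hb0 (by exact_mod_cast hu0)
      exact fun h ↦ this (RingOfIntegers.ext (by simpa using h))
  have key := hSS n0 le_rfl (U1 / U2) hm 1 (by rw [hval]; exact hone) (by simp)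
    (by
      intro h
      apply hne
      rw [one_pow, mul_one] at h
      rw [← hval, h]
      simp) M (by rw [one_pow, mul_one, hval]; exact hΛ)
  rw [one_pow, mul_one, hval] at key
  have hyR : (y : ℝ) ≠ 0 := by exact_mod_cast hy.1
  have hsle : |s| ≤ 2 * |y| := by
    have h1 : |s| ≤ |s| ^ ν := le_self_pow₀ (Int.one_le_abs hs0) hν0
    have h2 : |x + y| = |C| * |s| ^ ν := by rw [hs, abs_mul, abs_pow]
    have h3 := abs_add_le x y
    have h4 := Int.one_le_abs hC
    have h5 : 0 ≤ |s| ^ ν := by positivity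
    nlinarith
  have hule : |u| ≤ |y| := by
    have h1 : |u| ≤ |u| ^ ν := le_self_pow₀ (Int.one_le_abs hu0) hν0
    have h2 : |y| = |B| * |u| ^ ν := by rw [hyB, abs_mul, abs_pow]
    have h4 := Int.one_le_abs hB
    have h5 : 0 ≤ |u| ^ ν := by positivity
    nlinarith
  have hhs : logHeight₁ (s : K) ≤ tw * (Real.log 2 + L) := by
    refine (logHeight_int s hs0).trans ?_
    rw [← htw, hL, ← Real.log_mul (by norm_num) (by positivity)]
    have : |(s : ℝ)| ≤ 2 * |(y : ℝ)| := by exact_mod_cast hsle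
    have hs' : (s : ℝ) ≠ 0 := by exact_mod_cast hs0
    gcongr
  have hhu : logHeight₁ (u : K) ≤ tw * L := by
    refine (logHeight_int u hu0).trans ?_
    rw [← htw, hL]
    have : |(u : ℝ)| ≤ |(y : ℝ)| := by exact_mod_cast hule
    have hs' : (u : ℝ) ≠ 0 := by exact_mod_cast hu0
    gcongr
  have hh1 : logHeight₁ (α1 : K) ≤ tw * Real.log 2 + (logHeight₁ (c : K) + logHeight₁ (s : K)) +
      (logHeight₁ (b : K) + logHeight₁ (u : K)) := by
    have e1 : (α1 : K) = (c : K) * (s : K) - (b : K) * (u : K) := by simp [hα1]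
    rw [e1]
    have h1 := logHeight₁_sub_le ((c : K) * (s : K)) ((b : K) * (u : K))
    have h2 := logHeight₁_mul_le (c : K) (s : K)
    have h3 := logHeight₁_mul_le (b : K) (u : K)
    rw [htw]
    linarith
  have hh2 : logHeight₁ (α2 : K) ≤ tw * Real.log 2 + (logHeight₁ (c : K) + logHeight₁ (s : K)) +
      (logHeight₁ (ζ : K) + (logHeight₁ (b : K) + logHeight₁ (u : K))) := by
    have e1 : (α2 : K) = (c : K) * (s : K) - (ζ : K) * ((b : K) * (u : K)) := by simp [hα2]
    rw [e1]
    have h1 := logHeight₁_sub_le ((c : K) * (s : K)) ((ζ : K) * ((b : K) * (u : K)))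
    have h2 := logHeight₁_mul_le (c : K) (s : K)
    have h3 := logHeight₁_mul_le (b : K) (u : K)
    have h4 := logHeight₁_mul_le (ζ : K) ((b : K) * (u : K))
    rw [htw]
    linarith
  have hhΛ : logHeight₁ ((α1 : K) / α2) ≤ H0 + 4 * tw * L := by
    have h1 := logHeight₁_mul_le (α1 : K) (α2 : K)⁻¹
    rw [logHeight₁_inv, ← div_eq_mul_inv] at h1
    rw [hH0]
    linarith
  have hMle : (M : ℝ) ≤ ε * (H0 + 4 * tw * L + n0) := key.trans (by gcongr)
  have hee : (e : ℝ) ≤ ν * (M + D + 1) := by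
    rw [hM] at hef
    exact_mod_cast hef.le
  have hεν : ν * ε * (4 * tw) ≤ etaS S := by
    have : ν * ε * (4 * tw + 1) = etaS S := by
      rw [hεd]; field_simp
    have : 0 ≤ ν * ε := by positivity
    linarith
  have h7 : ν * ε * (4 * tw) * L ≤ etaS S * L := by gcongr
  have h8 : (ν : ℝ) * M ≤ ν * (ε * (H0 + 4 * tw * L + n0)) := by gcongr
  have : (0 : ℝ) ≤ a := Nat.cast_nonneg _
  linarith

lemma app2 (S : Finset ℕ) (hS : ∀ p ∈ S, p.Prime) (a ν : ℕ)
    (hν : 2 ≤ ν) (B C : ℤ) (hB : B ≠ 0) (hC : C ≠ 0) :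
    {y : ℤ | ∃ x s u : ℤ, IsSUnit S x ∧ IsSUnit S y ∧ |x| ≤ |y| ∧ Int.gcd x y ≤ a ∧
      y = B * u ^ ν ∧ x + y = C * s ^ ν ∧ s ≠ 0}.Finite := by
  obtain ⟨K, _, _, ζ, b, c, h1, h2, h3, h4⟩ := exists_field ν hν B C
  apply combine S hS
  · rintro y ⟨x, s, u, -, h, -⟩
    exact h
  · intro p hp
    obtain ⟨A, hA⟩ := app2_local S hS a ν hν B C hB hC ζ b c h1 h2 h3 h4 p hp
    exact ⟨A, fun y ⟨x, s, u, q1, q2, q3, q4, q5, q6, q7⟩ ↦ hA y x s u q1 q2 q3 q4 q5 q6 q7⟩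

end PartL


section PartM
open Height AdmissibleAbsValues NumberField IsDedekindDomain

lemma app1_local (S : Finset ℕ) (hS : ∀ p ∈ S, p.Prime) (a : ℕ) (p : ℕ) (hp : p ∈ S) :
    ∃ n0 : ℕ, ∃ A : ℝ, ∀ y x w z : ℤ, ∀ n ≥ n0, IsSUnit S x → IsSUnit S y → IsSUnit S w → |x| ≤ |y| →
      Int.gcd x y ≤ a → 2 ≤ |z| → x + y = w * z ^ n →
      (padicValInt p y : ℝ) ≤ etaS S * Real.log |(y : ℝ)| + A := by
  have hpp := hS p hp
  have : Fact p.Prime := ⟨hpp⟩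
  obtain ⟨P, hP⟩ := exists_over (K := ℚ) p hpp
  obtain ⟨D, hD⟩ := exists_D P p hpp a
  have heta := etaS_pos S
  set tw : ℝ := (totalWeight ℚ : ℝ) with htw
  have htw0 : 0 ≤ tw := Nat.cast_nonneg _
  set ε : ℝ := etaS S / (2 * tw + 2) with hεd
  have hε : 0 < ε := by positivity
  obtain ⟨n0, hn0, hSS⟩ := SSK P (TS ℚ S) (TS_finite S hS) ε hε
  have hlog2 : 0 ≤ Real.log 2 := Real.log_nonneg (by norm_num)
  have hlog2' : 1 / 2 ≤ Real.log 2 := by linarith [Real.log_two_gt_d9]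
  refine ⟨n0, a + ε * (tw * Real.log 2 + 2) + D, ?_⟩
  intro y x w z n hn hx hy hw hxy hg hz heq
  have hz0 : z ≠ 0 := by
    rintro rfl
    simp at hz
  have hy1 : (1 : ℝ) ≤ |(y : ℝ)| := by exact_mod_cast Int.one_le_abs hy.1
  have hL0 : 0 ≤ Real.log |(y : ℝ)| := Real.log_nonneg hy1
  set L := Real.log |(y : ℝ)| with hL
  set e := padicValInt p y with he
  have triv : (e : ℝ) ≤ a + D → (e : ℝ) ≤ etaS S * L + (a + ε * (tw * Real.log 2 + 2) + D) := by
    intro h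
    have h1 : 0 ≤ etaS S * L := by positivity
    have h2 : 0 ≤ ε * (tw * Real.log 2 + 2) := by positivity
    linarith
  rcases gcd_small a p hpp x y hx.1 hy.1 hg with hxa | hya
  swap
  · apply triv
    have : (e : ℝ) ≤ a := by exact_mod_cast hya
    have : 0 ≤ (D : ℝ) := by positivity
    linarith
  by_cases hfD : e ≤ D
  · apply triv
    have h2 : (e : ℝ) ≤ D := by exact_mod_cast hfD
    have : (0 : ℝ) ≤ a := Nat.cast_nonneg _
    linarith
  obtain ⟨M, hM⟩ : ∃ M, e = M + D := ⟨e - D, by omega⟩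
  have hM1 : 1 ≤ M := by omega
  have hx0 : (x : ℚ) ≠ 0 := by exact_mod_cast hx.1
  have hy0 : (y : ℚ) ≠ 0 := by exact_mod_cast hy.1
  have hw0 : (w : ℚ) ≠ 0 := by exact_mod_cast hw.1
  have hp0 : (p : ℚ) ≠ 0 := by exact_mod_cast hpp.ne_zero
  obtain ⟨j, z', hz', hzz⟩ : ∃ (j : ℕ) (z' : ℤ), ¬ (p : ℤ) ∣ z' ∧ z = p ^ j * z' := by
    obtain ⟨j, z', h1, h2⟩ := (Int.finiteMultiplicity_iff (a := (p : ℤ)) (b := z)).2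
      ⟨by simpa using hpp.ne_one, hz0⟩ |>.exists_eq_pow_mul_and_not_dvd |> fun ⟨c, h1, h2⟩ ↦ (⟨_, c, h1, h2⟩ :
        ∃ (j : ℕ) (c : ℤ), z = p ^ j * c ∧ ¬ (p : ℤ) ∣ c)
    exact ⟨j, z', h2, h1⟩
  have hz'0 : (z' : ℚ) ≠ 0 := by
    intro h
    apply hz'
    have : z' = 0 := by exact_mod_cast h
    rw [this]
    exact dvd_zero _
  have hpS : IsSUnit S (p : ℤ) := by
    refine ⟨by exact_mod_cast hpp.ne_zero, ?_⟩
    intro q hq hqp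
    rw [Int.natCast_dvd_natCast, Nat.prime_dvd_prime_iff_eq hq hpp] at hqp
    rwa [hqp]
  set Ux : ℚˣ := Units.mk0 (x : ℚ) hx0 with hUx
  set Uw : ℚˣ := Units.mk0 (w : ℚ) hw0 with hUw
  set Up : ℚˣ := Units.mk0 (p : ℚ) hp0 with hUp
  set Uz : ℚˣ := Units.mk0 (z' : ℚ) hz'0 with hUz
  have hmx : Ux ∈ (TS ℚ S).unit ℚ := mem_unit_of_dvd S x hx x dvd_rfl Ux (by simp [hUx])
  have hmw : Uw ∈ (TS ℚ S).unit ℚ := mem_unit_of_dvd S w hw w dvd_rfl Uw (by simp [hUw])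
  have hmp : Up ∈ (TS ℚ S).unit ℚ := mem_unit_of_dvd S p hpS ((p : ℤ) : 𝓞 ℚ) dvd_rfl Up (by simp [hUp])
  set U : ℚˣ := Uw * (Up ^ j) ^ n / Ux with hU
  have hm : U ∈ (TS ℚ S).unit ℚ := div_mem (mul_mem hmw (pow_mem (pow_mem hmp _) _)) hmx
  have hval : ((U * Uz ^ n : ℚˣ) : ℚ) = ((x + y : ℤ) : ℚ) / x := by
    rw [heq, hzz]
    simp only [hU, hUx, hUw, hUp, hUz, Units.val_mul, Units.val_div_eq_div_val, Units.val_pow_eq_pow_val,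
      Units.val_mk0]
    push_cast
    ring
  have hdiff : ((x + y : ℤ) : ℚ) / x - 1 = y / x := by
    push_cast
    field_simp
    ring
  have hvy : vP P (y : ℚ) ≤ (1 / 2) ^ e := by
    rw [vP_intcast P p hpp hP y hy.1]
    exact pow_le_pow_left₀ (AbsoluteValue.nonneg _ _) (vP_prime P p hP) _
  have hvx : (1 / 2 : ℝ) ^ D ≤ vP P (x : ℚ) := by
    rw [vP_intcast P p hpp hP x hx.1]
    exact hD _ hxa
  have hvxpos : 0 < vP P (x : ℚ) := lt_of_lt_of_le (by positivity) hvx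
  have hΛ : vP P (((x + y : ℤ) : ℚ) / x - 1) ≤ (1 / 2) ^ M := by
    rw [hdiff, map_div₀, div_le_iff₀ hvxpos]
    calc vP P (y : ℚ) ≤ (1 / 2) ^ e := hvy
      _ = (1 / 2) ^ M * (1 / 2) ^ D := by rw [hM, pow_add]
      _ ≤ _ := by gcongr
  have hlt : vP P (((x + y : ℤ) : ℚ) / x - 1) < 1 :=
    lt_of_le_of_lt hΛ (pow_lt_one₀ (by norm_num) (by norm_num) (by omega))
  have hone : vP P (((x + y : ℤ) : ℚ) / x) = 1 :=
    na_one_of_sub_lt (vP P) (isNonarchimedean _ (vP_mem P)) _ hlt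
  have hvz : vP P (Uz : ℚ) = 1 := vP_coprime P p hpp hP z' hz'
  have hvU : vP P (U : ℚ) = 1 := by
    rw [← hval, Units.val_mul, map_mul, Units.val_pow_eq_pow_val, map_pow, hvz, one_pow, mul_one] at hone
    exact hone
  have key := hSS n hn U hm Uz hvU hvz
    (by
      intro h
      rw [h, Units.val_one] at hval
      rw [← hval, sub_self] at hdiff
      exact div_ne_zero hy0 hx0 hdiff.symm) M (by rw [hval]; exact hΛ)
  rw [hval] at key
  have hxyle : |x + y| ≤ 2 * |y| := by
    have h3 := abs_add_le x y
    linarith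
  have hsum0 : x + y ≠ 0 := by
    rw [heq]
    exact mul_ne_zero hw.1 (pow_ne_zero _ hz0)
  have hyR : (y : ℝ) ≠ 0 := by exact_mod_cast hy.1
  have hh1 : logHeight₁ ((x + y : ℤ) : ℚ) ≤ tw * (Real.log 2 + L) := by
    refine (logHeight_int _ hsum0).trans ?_
    rw [← htw, hL, ← Real.log_mul (by norm_num) (by positivity)]
    have : |((x + y : ℤ) : ℝ)| ≤ 2 * |(y : ℝ)| := by exact_mod_cast hxyle
    have hs' : ((x + y : ℤ) : ℝ) ≠ 0 := by exact_mod_cast hsum0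
    gcongr
  have hh2 : logHeight₁ (x : ℚ) ≤ tw * L := by
    refine (logHeight_int _ hx.1).trans ?_
    rw [← htw, hL]
    have : |(x : ℝ)| ≤ |(y : ℝ)| := by exact_mod_cast hxy
    have hs' : (x : ℝ) ≠ 0 := by exact_mod_cast hx.1
    gcongr
  have hnle : (n : ℝ) ≤ 2 * L + 2 := by
    have h1 : (2 : ℤ) ^ n ≤ 2 * |y| := by
      calc (2 : ℤ) ^ n ≤ |z| ^ n := pow_le_pow_left₀ (by norm_num) hz _
        _ ≤ |w| * |z| ^ n := le_mul_of_one_le_left (by positivity) (Int.one_le_abs hw.1)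
        _ = |x + y| := by rw [heq, abs_mul, abs_pow]
        _ ≤ _ := hxyle
    have h2 : (2 : ℝ) ^ n ≤ 2 * |(y : ℝ)| := by exact_mod_cast h1
    have h3 := Real.log_le_log (by positivity) h2
    rw [Real.log_pow, Real.log_mul (by norm_num) (by positivity), ← hL] at h3
    have h4 : Real.log 2 ≤ 1 := by linarith [Real.log_two_lt_d9]
    have h5 : (n : ℝ) * (1 / 2) ≤ n * Real.log 2 := by gcongr
    linarith
  have hhΛ : logHeight₁ (((x + y : ℤ) : ℚ) / x) ≤ tw * Real.log 2 + 2 * tw * L := by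
    have h1 := logHeight₁_mul_le ((x + y : ℤ) : ℚ) (x : ℚ)⁻¹
    rw [logHeight₁_inv, ← div_eq_mul_inv] at h1
    linarith
  have hMle : (M : ℝ) ≤ ε * ((tw * Real.log 2 + 2 * tw * L) + (2 * L + 2)) := key.trans (by gcongr)
  have hee : (e : ℝ) = M + D := by exact_mod_cast hM
  have hεν : ε * (2 * tw + 2) = etaS S := by
    rw [hεd]; field_simp
  have : (0 : ℝ) ≤ a := Nat.cast_nonneg _
  rw [← hεν]
  linarith

lemma app1 (S : Finset ℕ) (hS : ∀ p ∈ S, p.Prime) (a : ℕ) :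
    ∃ n0 : ℕ, {y : ℤ | ∃ x w z : ℤ, ∃ n ≥ n0, IsSUnit S x ∧ IsSUnit S y ∧ IsSUnit S w ∧ |x| ≤ |y| ∧
      Int.gcd x y ≤ a ∧ 2 ≤ |z| ∧ x + y = w * z ^ n}.Finite := by
  choose! N A hA using app1_local S hS a
  refine ⟨S.sup N, ?_⟩
  apply combine S hS
  · rintro y ⟨x, w, z, n, -, -, h, -⟩
    exact h
  · intro p hp
    refine ⟨A p, ?_⟩
    rintro y ⟨x, w, z, n, hn, q1, q2, q3, q4, q5, q6, q7⟩
    exact hA p hp y x w z n ((Finset.le_sup hp).trans hn) q1 q2 q3 q4 q5 q6 q7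

end PartM


section PartN

lemma sunit_split (S : Finset ℕ) (hS : ∀ p ∈ S, p.Prime) (ν : ℕ) (hν : 0 < ν) (y : ℤ) (hy : IsSUnit S y) :
    ∃ B ∈ Finset.Icc (-((∏ p ∈ S, p ^ ν : ℕ) : ℤ)) ((∏ p ∈ S, p ^ ν : ℕ) : ℤ), ∃ u : ℤ,
      B ≠ 0 ∧ u ≠ 0 ∧ y = B * u ^ ν := by
  have hy0 : y.natAbs ≠ 0 := by simpa using hy.1
  have hprod : y.natAbs = ∏ p ∈ S, p ^ (y.natAbs.factorization p) := by
    conv_lhs => rw [← Nat.prod_factorization_pow_eq_self hy0]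
    apply Finsupp.prod_of_support_subset
    · intro p hp
      rw [Nat.support_factorization, Nat.mem_primeFactors] at hp
      exact hy.2 p hp.1 (Int.natCast_dvd.2 hp.2.1)
    · simp
  set f := y.natAbs.factorization with hf
  set b : ℕ := ∏ p ∈ S, p ^ (f p % ν) with hb
  set u : ℕ := ∏ p ∈ S, p ^ (f p / ν) with hu
  have hbu : y.natAbs = b * u ^ ν := by
    rw [hprod, hb, hu, ← Finset.prod_pow, ← Finset.prod_mul_distrib]
    apply Finset.prod_congr rfl
    intro p _
    rw [← pow_mul, ← pow_add, Nat.mul_comm, Nat.mod_add_div]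
  have hb0 : b ≠ 0 := by
    intro h
    rw [h, zero_mul] at hbu
    exact hy0 hbu
  have hu0 : u ≠ 0 := by
    intro h
    rw [h, zero_pow hν.ne', mul_zero] at hbu
    exact hy0 hbu
  have hble : b ≤ ∏ p ∈ S, p ^ ν := by
    apply Finset.prod_le_prod'
    intro p hp
    exact Nat.pow_le_pow_right (hS p hp).pos (Nat.mod_lt _ hν).le
  have hbleZ : (b : ℤ) ≤ ((∏ p ∈ S, p ^ ν : ℕ) : ℤ) := by exact_mod_cast hble
  rcases y.natAbs_eq with h | h
  · refine ⟨b, Finset.mem_Icc.2 ⟨by omega, hbleZ⟩, u, by exact_mod_cast hb0, by exact_mod_cast hu0, ?_⟩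
    rw [h, hbu]
    push_cast
    rfl
  · refine ⟨-b, Finset.mem_Icc.2 ⟨by omega, by omega⟩, u, by simpa using hb0, by exact_mod_cast hu0, ?_⟩
    rw [h, hbu]
    push_cast
    ring

lemma app2' (S : Finset ℕ) (hS : ∀ p ∈ S, p.Prime) (a ν : ℕ) (hν : 2 ≤ ν) :
    {y : ℤ | ∃ x w z : ℤ, IsSUnit S x ∧ IsSUnit S y ∧ IsSUnit S w ∧ |x| ≤ |y| ∧ Int.gcd x y ≤ a ∧
      z ≠ 0 ∧ x + y = w * z ^ ν}.Finite := by
  set I := Finset.Icc (-((∏ p ∈ S, p ^ ν : ℕ) : ℤ)) ((∏ p ∈ S, p ^ ν : ℕ) : ℤ) with hI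
  have hfin : (⋃ B ∈ I.filter (· ≠ 0), ⋃ C ∈ I.filter (· ≠ 0),
      {y : ℤ | ∃ x s u : ℤ, IsSUnit S x ∧ IsSUnit S y ∧ |x| ≤ |y| ∧ Int.gcd x y ≤ a ∧
      y = B * u ^ ν ∧ x + y = C * s ^ ν ∧ s ≠ 0}).Finite := by
    apply Set.Finite.biUnion (Finset.finite_toSet _)
    intro B hB
    apply Set.Finite.biUnion (Finset.finite_toSet _)
    intro C hC
    exact app2 S hS a ν hν B C (Finset.mem_filter.1 hB).2 (Finset.mem_filter.1 hC).2
  apply hfin.subset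
  rintro y ⟨x, w, z, hx, hy, hw, hxy, hg, hz, heq⟩
  obtain ⟨B, hB, u, hB0, hu0, hyB⟩ := sunit_split S hS ν (by omega) y hy
  obtain ⟨C, hC, t, hC0, ht0, hwC⟩ := sunit_split S hS ν (by omega) w hw
  refine Set.mem_biUnion (x := B) (Finset.mem_coe.2 (Finset.mem_filter.2 ⟨hB, hB0⟩)) ?_
  refine Set.mem_biUnion (x := C) (Finset.mem_coe.2 (Finset.mem_filter.2 ⟨hC, hC0⟩)) ?_
  refine ⟨x, t * z, u, hx, hy, hxy, hg, hyB, ?_, mul_ne_zero ht0 hz⟩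
  rw [heq, hwC, mul_pow, mul_assoc]

lemma y_finite (S : Finset ℕ) (hS : ∀ p ∈ S, p.Prime) (a : ℕ) :
    {y : ℤ | ∃ x w z : ℤ, ∃ n : ℕ, 2 ≤ n ∧ IsSUnit S x ∧ IsSUnit S y ∧ IsSUnit S w ∧ |x| ≤ |y| ∧
      Int.gcd x y ≤ a ∧ z ≠ 0 ∧ x + y = w * z ^ n}.Finite := by
  obtain ⟨n0, h1⟩ := app1 S hS a
  have h2 : (⋃ ν ∈ Finset.Icc 2 (n0 + 2), {y : ℤ | ∃ x w z : ℤ, IsSUnit S x ∧ IsSUnit S y ∧ IsSUnit S w ∧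
      |x| ≤ |y| ∧ Int.gcd x y ≤ a ∧ z ≠ 0 ∧ x + y = w * z ^ ν}).Finite := by
    apply Set.Finite.biUnion (Finset.finite_toSet _)
    intro ν hν
    exact app2' S hS a ν (Finset.mem_Icc.1 hν).1
  apply (h1.union h2).subset
  rintro y ⟨x, w, z, n, hn, hx, hy, hw, hxy, hg, hz, heq⟩
  by_cases hnn : n ≤ n0 + 2
  · right
    exact Set.mem_biUnion (x := n) (Finset.mem_coe.2 (Finset.mem_Icc.2 ⟨hn, hnn⟩))
      ⟨x, w, z, hx, hy, hw, hxy, hg, hz, heq⟩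
  by_cases hz2 : 2 ≤ |z|
  · left
    exact ⟨x, w, z, n, by omega, hx, hy, hw, hxy, hg, hz2, heq⟩
  · right
    refine Set.mem_biUnion (x := 2) (Finset.mem_coe.2 (Finset.mem_Icc.2 ⟨le_rfl, by omega⟩))
      ⟨x, w * z ^ n, 1, hx, hy, ?_, hxy, hg, one_ne_zero, by rw [heq]; ring⟩
    have hzu : z = 1 ∨ z = -1 := by
      have := Int.one_le_abs hz
      have h3 : |z| = 1 := by omega
      rcases abs_eq (zero_le_one' ℤ) |>.1 h3 with h | h
      · exact Or.inl h
      · exact Or.inr h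
    have hpm : z ^ n = 1 ∨ z ^ n = -1 := by
      rcases hzu with rfl | rfl
      · simp
      · exact neg_one_pow_eq_or ℤ n
    rcases hpm with h | h
    · rw [h, mul_one]
      exact hw
    · rw [h, mul_neg_one]
      exact ⟨neg_ne_zero.2 hw.1, fun p hp hd ↦ hw.2 p hp ((dvd_neg).1 hd)⟩

end PartN

theorem finitely_many_sums_of_S_units_perfect_power
    (S : Finset ℕ) (hS : ∀ p ∈ S, p.Prime) (a : ℕ) (ha : 0 < a) :
    {t : ℤ × ℤ × ℤ | IsSUnit S t.1 ∧ IsSUnit S t.2.1 ∧ IsSUnit S t.2.2 ∧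
      Int.gcd t.1 t.2.1 ≤ a ∧
      ∃ n : ℕ, 2 ≤ n ∧ ∃ z : ℤ, z ≠ 0 ∧ t.1 + t.2.1 = t.2.2 * z ^ n}.Finite := by
  have hfin := y_finite S hS a
  obtain ⟨Y, hY⟩ := (hfin.image (fun y ↦ |y|)).bddAbove
  have hbd : ∀ x y w z : ℤ, ∀ n : ℕ, 2 ≤ n → IsSUnit S x → IsSUnit S y → IsSUnit S w → |x| ≤ |y| →
      Int.gcd x y ≤ a → z ≠ 0 → x + y = w * z ^ n → |y| ≤ Y := by
    intro x y w z n q1 q2 q3 q4 q5 q6 q7 q8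
    exact hY ⟨y, ⟨x, w, z, n, q1, q2, q3, q4, q5, q6, q7, q8⟩, rfl⟩
  have hbox := (Set.finite_Icc (-Y) Y).prod ((Set.finite_Icc (-Y) Y).prod (Set.finite_Icc (-(2 * Y)) (2 * Y)))
  apply hbox.subset
  rintro ⟨x, y, w⟩ ⟨hx, hy, hw, hg, n, hn, z, hz, heq⟩
  dsimp only at hx hy hw hg heq
  have hxy : |x| ≤ Y ∧ |y| ≤ Y := by
    rcases le_total |x| |y| with h | h
    · have := hbd x y w z n hn hx hy hw h hg hz heq
      exact ⟨h.trans this, this⟩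
    · have := hbd y x w z n hn hy hx hw h (by rwa [Int.gcd_comm]) hz (by rwa [add_comm])
      exact ⟨this, h.trans this⟩
  have hwle : |w| ≤ 2 * Y := by
    have h1 : |x + y| = |w| * |z ^ n| := by rw [heq, abs_mul]
    have h2 : 1 ≤ |z ^ n| := Int.one_le_abs (pow_ne_zero _ hz)
    have h3 := abs_add_le x y
    have h4 : |w| ≤ |w| * |z ^ n| := le_mul_of_one_le_right (abs_nonneg _) h2
    linarith [hxy.1, hxy.2]
  exact ⟨abs_le.1 hxy.1, abs_le.1 hxy.2, abs_le.1 hwle⟩
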